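/- Let K be a field and n ≥ 3. Let P₁, P₂ ∈ Sp(2n, K) be cyclic and strictly hyperbolic symplectic matrices. Then for every M ∈ Sp(2n, K) that is not a scalar matrix, there exist S₁, S₂ ∈ Sp(2n, K) such that M = (S₁ P₁ S₁⁻¹) · (S₂ P₂ S₂⁻¹). In other words, the product of the two Sp(2n,K)-conjugacy classes of P₁ and P₂ contains every nonscalar element of Sp(2n, K). -/

import Mathlib

open Matrix Polynomial

noncomputable section

/-- The standard symplectic form matrix `G = [[0, Iₙ], [-Iₙ, 0]]`. -/
def sympJ (n : ℕ) (K : Type*) [Field K] : Matrix (Fin n ⊕ Fin n) (Fin n ⊕ Fin n) K :=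
  Matrix.fromBlocks 0 1 (-1) 0

/-- Membership in the standard symplectic group `Sp(2n, K)`: `P G Pᵀ = G`. -/
def IsSymplectic {n : ℕ} {K : Type*} [Field K]
    (P : Matrix (Fin n ⊕ Fin n) (Fin n ⊕ Fin n) K) : Prop :=
  P * sympJ n K * Pᵀ = sympJ n K

/-- A matrix is cyclic if its characteristic polynomial equals its minimal polynomial. -/
def IsCyclicMat {ι : Type*} [Fintype ι] [DecidableEq ι] {K : Type*} [Field K]
    (A : Matrix ι ι K) : Prop :=
  A.charpoly = minpoly K A

/-- The reciprocal polynomial `q*(x) = q(0)⁻¹ xⁿ q(1/x)` of a polynomial `q`. -/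
def recipPoly {K : Type*} [Field K] (q : Polynomial K) : Polynomial K :=
  Polynomial.C (q.coeff 0)⁻¹ * q.reverse

/-- A symplectic matrix is strictly hyperbolic if its minimal polynomial is `q q*`
with `q` monic of degree `n`, `q(0) ≠ 0`, and `q` coprime to its reciprocal `q*`. -/
def IsStrictlyHyperbolic {n : ℕ} {K : Type*} [Field K]
    (P : Matrix (Fin n ⊕ Fin n) (Fin n ⊕ Fin n) K) : Prop :=
  ∃ q : Polynomial K, q.Monic ∧ q.natDegree = n ∧ q.coeff 0 ≠ 0 ∧
    IsCoprime q (recipPoly q) ∧ minpoly K P = q * recipPoly q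

/-!
For a Lagrangian subspace `L`, put `b x y = B x (M y)` on `L` and `H = L ⊓ M⁻¹ L`. Let `q₁` be the
factor belonging to `P₁`, and `p ≠ q₁` one of the factors `q₂`, `q₂*` belonging to `P₂`. Suppose
operators `D`, `A` on `L` have minimal polynomials `p`, `q₁`, that `b (A u) (D w)` is symmetric in
`u` and `w`, and that `A u = M (D u)` whenever `D u ∈ H`. Then `{M (D u) - A u}` is isotropic and
meets `L` trivially, so it lies in a Lagrangian complement `L'`, and `D` extends to an isometry `Y`
for which `M Y` preserves `L'`. As `Y` induces `D` on `L`, its minimal polynomial is `p p*`; as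
`M Y` induces `A` on `V / L'`, its minimal polynomial is `q₁ q₁*`. Minimal polynomials of this shape
determine the conjugacy class, and `M = (M Y) Y⁻¹`.

If `B x (M x)` does not vanish identically, `L` is chosen invariant under `M + M⁻¹`, which makes `b`
symmetric. Otherwise `b` is alternating on every `L`, and `L` is chosen so that `H` has
codimension 2.

It remains to construct `D` and `A`. If `H = 0`, `A` is a rank one perturbation of `D`. Otherwise a
single map `C` from `H` to a space `Y ⊆ L` in which `H` is a hyperplane gives Kronecker chains for
both pencils `(C, id)` and `(C, M)`; extending these chains to bases of `L` on which `D` and `A` act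
as companion matrices leaves enough freedom to prescribe both minimal polynomials.
-/

section CyclicOperators

open Module

variable {K V : Type*} [Field K] [AddCommGroup V] [Module K V]

/-- The map `f ↦ f(D) y` from polynomials to vectors. -/
def cyclicMap (D : End K V) (y : V) : K[X] →ₗ[K] V :=
  LinearMap.applyₗ y ∘ₗ (aeval D).toLinearMap

@[simp]
theorem cyclicMap_apply (D : End K V) (y : V) (f : K[X]) : cyclicMap D y f = aeval D f y :=
  rfl

/-- The cyclic subspace `K[D] y`: the smallest `D`-invariant subspace containing `y`. -/
def cyclicSpan (D : End K V) (y : V) : Submodule K V :=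
  LinearMap.range (cyclicMap D y)

theorem mem_cyclicSpan {D : End K V} {y z : V} :
    z ∈ cyclicSpan D y ↔ ∃ f : K[X], aeval D f y = z :=
  Iff.rfl

theorem mem_cyclicSpan_self (D : End K V) (y : V) : y ∈ cyclicSpan D y :=
  mem_cyclicSpan.2 ⟨1, by simp⟩

theorem cyclicSpan_le_comap (D : End K V) (y : V) :
    cyclicSpan D y ≤ (cyclicSpan D y).comap D := by
  rintro _ ⟨f, rfl⟩
  exact mem_cyclicSpan.2 ⟨X * f, by simp⟩

theorem aeval_apply_comm (D : End K V) (f g : K[X]) (x : V) :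
    aeval D f (aeval D g x) = aeval D g (aeval D f x) := by
  rw [← End.mul_apply, ← End.mul_apply, ← map_mul, ← map_mul, mul_comm]

theorem apply_aeval_of_intertwining {W : Type*} [AddCommGroup W] [Module K W] {π : V →ₗ[K] W}
    {D : End K V} {A : End K W} (h : ∀ v, π (D v) = A (π v)) (f : K[X]) (v : V) :
    π (aeval D f v) = aeval A f (π v) := by
  induction f using Polynomial.induction_on generalizing v with
  | C a => simp
  | add p q hp hq => simp [hp, hq]
  | monomial n a hn => simpa [pow_succ, h] using hn (D v)

theorem finrank_le_natDegree_minpoly [FiniteDimensional K V] {D : End K V} {y : V}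
    (hy : cyclicSpan D y = ⊤) : finrank K V ≤ (minpoly K D).natDegree := by
  have hmonic : (minpoly K D).Monic := minpoly.monic (Algebra.IsIntegral.isIntegral D)
  have hrange : LinearMap.range
      (cyclicMap D y ∘ₗ (degreeLT K (minpoly K D).natDegree).subtype) = ⊤ := by
    refine eq_top_iff.2 fun u _ ↦ ?_
    obtain ⟨f, rfl⟩ := mem_cyclicSpan.1 (hy ▸ Submodule.mem_top : u ∈ cyclicSpan D y)
    refine ⟨⟨f %ₘ minpoly K D, mem_degreeLT.2 ?_⟩, ?_⟩
    · exact (degree_modByMonic_lt f hmonic).trans_le degree_le_natDegree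
    · conv_rhs => rw [← modByMonic_add_div f (minpoly K D)]
      simp
  calc finrank K V ≤ finrank K (degreeLT K (minpoly K D).natDegree) :=
        LinearMap.finrank_le_finrank_of_surjective (LinearMap.range_eq_top.1 hrange)
    _ = (minpoly K D).natDegree := by
        rw [(degreeLTEquiv K _).finrank_eq, finrank_fin_fun]

theorem aeval_eq_zero_of_apply_eq_zero {D : End K V} {y : V} (hy : cyclicSpan D y = ⊤)
    {p : K[X]} (hpy : aeval D p y = 0) : aeval D p = 0 := by
  ext u
  obtain ⟨f, rfl⟩ := mem_cyclicSpan.1 (hy ▸ Submodule.mem_top : u ∈ cyclicSpan D y)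
  simp [aeval_apply_comm D p f, hpy]

theorem minpoly_eq_of_cyclicSpan_eq_top [FiniteDimensional K V] {D : End K V} {y : V} {p : K[X]}
    (hp : p.Monic) (hdeg : p.natDegree = finrank K V) (hy : cyclicSpan D y = ⊤)
    (hpy : aeval D p y = 0) : minpoly K D = p :=
  (eq_of_monic_of_dvd_of_natDegree_le (minpoly.monic (Algebra.IsIntegral.isIntegral D)) hp
    (minpoly.dvd K D (aeval_eq_zero_of_apply_eq_zero hy hpy))
    (hdeg ▸ finrank_le_natDegree_minpoly hy)).symm

theorem aeval_apply_eq_zero_iff_minpoly_dvd {D : End K V} {y : V} (hy : cyclicSpan D y = ⊤)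
    {f : K[X]} : aeval D f y = 0 ↔ minpoly K D ∣ f := by
  refine ⟨fun hf ↦ minpoly.dvd K D (aeval_eq_zero_of_apply_eq_zero hy hf), ?_⟩
  rintro ⟨g, rfl⟩
  simp

theorem exists_cyclicSpan_eq_top [FiniteDimensional K V] {D : End K V}
    (hD : (minpoly K D).natDegree = finrank K V) : ∃ y, cyclicSpan D y = ⊤ := by
  obtain ⟨y, hy⟩ := exists_ker_toSpanSingleton_eq_annihilator K[X] (AEval' D)
  rw [← span_minpoly_eq_annihilator] at hy
  have hdvd (f : K[X]) (hf : aeval D f ((AEval'.of D).symm y) = 0) : minpoly K D ∣ f := by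
    rw [← Ideal.mem_span_singleton, ← hy, LinearMap.mem_ker, LinearMap.toSpanSingleton_apply]
    exact hf
  have hinj : Function.Injective (cyclicMap D ((AEval'.of D).symm y) ∘ₗ
      (degreeLT K (minpoly K D).natDegree).subtype) := by
    refine (injective_iff_map_eq_zero _).2 fun f hf ↦ Subtype.ext ?_
    exact eq_zero_of_dvd_of_degree_lt (hdvd f hf) ((mem_degreeLT.1 f.2).trans_le
      (degree_eq_natDegree (minpoly.ne_zero (Algebra.IsIntegral.isIntegral D))).ge)
  have hsurj := (LinearMap.injective_iff_surjective_of_finrank_eq_finrank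
    (by rw [(degreeLTEquiv K _).finrank_eq, finrank_fin_fun, hD])).1 hinj
  exact ⟨_, eq_top_iff.2 fun u _ ↦ (hsurj u).imp' Subtype.val fun _ ↦ id⟩

theorem exists_linearEquiv_intertwining [FiniteDimensional K V] {D D' : End K V}
    (h : minpoly K D = minpoly K D') (hD : (minpoly K D).natDegree = finrank K V) :
    ∃ g : V ≃ₗ[K] V, ∀ u, g (D u) = D' (g u) := by
  obtain ⟨y, hy⟩ := exists_cyclicSpan_eq_top hD
  obtain ⟨y', hy'⟩ := exists_cyclicSpan_eq_top (h ▸ hD)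
  have hker : LinearMap.ker (cyclicMap D y) = LinearMap.ker (cyclicMap D' y') := by
    ext f
    exact (aeval_apply_eq_zero_iff_minpoly_dvd hy).trans
      (h ▸ (aeval_apply_eq_zero_iff_minpoly_dvd hy').symm)
  let π : (K[X] ⧸ LinearMap.ker (cyclicMap D y)) ≃ₗ[K] V :=
    LinearMap.quotKerEquivOfSurjective _ (LinearMap.range_eq_top.1 hy)
  let π' : (K[X] ⧸ LinearMap.ker (cyclicMap D' y')) ≃ₗ[K] V :=
    LinearMap.quotKerEquivOfSurjective _ (LinearMap.range_eq_top.1 hy')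
  let g : V ≃ₗ[K] V := π.symm ≪≫ₗ Submodule.quotEquivOfEq _ _ hker ≪≫ₗ π'
  have hg (f : K[X]) : g (aeval D f y) = aeval D' f y' := by
    have hπ : π.symm (aeval D f y) = Submodule.Quotient.mk f :=
      LinearMap.quotKerEquivOfSurjective_symm_apply _ (LinearMap.range_eq_top.1 hy) f
    simp only [g, LinearEquiv.trans_apply, hπ, Submodule.quotEquivOfEq_mk]
    rfl
  refine ⟨g, fun u ↦ ?_⟩
  obtain ⟨f, rfl⟩ := mem_cyclicSpan.1 (hy ▸ Submodule.mem_top : u ∈ cyclicSpan D y)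
  calc g (D (aeval D f y)) = g (aeval D (X * f) y) := by simp
    _ = D' (g (aeval D f y)) := by rw [hg, hg]; simp

end CyclicOperators

section HookOperators

open Module

theorem coeff_iterate_divX {R : Type*} [Semiring R] (p : R[X]) (k i : ℕ) :
    (divX^[k] p).coeff i = p.coeff (i + k) := by
  induction k generalizing i with
  | zero => rfl
  | succ k ih => rw [Function.iterate_succ_apply', coeff_divX, ih, add_assoc, add_comm 1 k]

theorem iterate_divX_natDegree {R : Type*} [Semiring R] {p : R[X]} (hp : p.Monic) :
    divX^[p.natDegree] p = 1 := by
  ext (_ | i)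
  · simpa [coeff_iterate_divX] using hp.coeff_natDegree
  · rw [coeff_iterate_divX, coeff_one, if_neg i.succ_ne_zero]
    exact coeff_eq_zero_of_natDegree_lt (by omega)

theorem iterate_divX_mul_X_pow_add_sum {R : Type*} [Semiring R] (p : R[X]) (k : ℕ) :
    divX^[k] p * X ^ k + ∑ i ∈ Finset.range k, C (p.coeff i) * X ^ i = p := by
  induction k with
  | zero => simp
  | succ k ih =>
    have hstep : divX^[k + 1] p * X + C (p.coeff k) = divX^[k] p := by
      simpa [Function.iterate_succ_apply', coeff_iterate_divX] using divX_mul_X_add (divX^[k] p)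
    rw [Finset.sum_range_succ, ← add_assoc, add_right_comm, pow_succ', ← mul_assoc, ← add_mul,
      hstep, ih]

variable {K V : Type*} [Field K] [AddCommGroup V] [Module K V]

theorem exists_linearMap_apply_eq_of_span {W : Type*} [AddCommGroup W] [Module K W] {n : ℕ}
    (hn : finrank K V = n) {e : ℕ → V} (he : Submodule.span K (e '' Set.Iio n) = ⊤) (w : ℕ → W) :
    ∃ D : V →ₗ[K] W, ∀ i < n, D (e i) = w i := by
  have hspan : ⊤ ≤ Submodule.span K (Set.range fun i : Fin n ↦ e i) := by
    rw [← he]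
    refine Submodule.span_mono ?_
    rintro _ ⟨i, hi, rfl⟩
    exact ⟨⟨i, hi⟩, rfl⟩
  let b := basisOfTopLeSpanOfCardEqFinrank _ hspan (by rw [Fintype.card_fin, hn])
  refine ⟨b.constr K fun i ↦ w i, fun i hi ↦ ?_⟩
  have hb : b ⟨i, hi⟩ = e i := by simp [b]
  rw [← hb, b.constr_basis]

theorem aeval_iterate_divX_apply {D : End K V} {p : K[X]} (hp : p.Monic) {u : ℕ → V} {m : ℕ}
    (hm : m ≤ p.natDegree)
    (hu : ∀ j < m, D (u j) = u (j + 1) - p.coeff (p.natDegree - 1 - j) • u 0) :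
    ∀ j ≤ m, aeval D (divX^[p.natDegree - j] p) (u 0) = u j := by
  intro j hj
  induction j with
  | zero => simp [iterate_divX_natDegree hp]
  | succ j ih =>
    have hstep := divX_mul_X_add (divX^[p.natDegree - (j + 1)] p)
    rw [← Function.iterate_succ_apply' divX, coeff_iterate_divX,
      show (p.natDegree - (j + 1)).succ = p.natDegree - j by omega,
      show 0 + (p.natDegree - (j + 1)) = p.natDegree - 1 - j by omega] at hstep
    rw [← hstep, mul_comm, map_add, map_mul, aeval_X, aeval_C, LinearMap.add_apply,
      End.mul_apply, ih (by omega), hu j (by omega), Module.algebraMap_end_apply,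
      sub_add_cancel]

theorem minpoly_eq_of_hook [FiniteDimensional K V] {D : End K V} {p : K[X]} (hp : p.Monic)
    (hdeg : p.natDegree = finrank K V) {h : ℕ} (hh : h ≤ p.natDegree) {e : ℕ → V}
    (he : Submodule.span K (e '' Set.Iio p.natDegree) = ⊤)
    (hlow : ∀ i < h, D (e i) = e (i + 1))
    (hhigh : ∀ j < p.natDegree - h,
      D (e (h + j)) = e (h + (j + 1)) - p.coeff (p.natDegree - 1 - j) • e h)
    (hend : e p.natDegree = -∑ i ∈ Finset.range h, p.coeff i • e i) : minpoly K D = p := by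
  have hpow (i : ℕ) (hi : i ≤ h) : (D ^ i) (e 0) = e i := by
    induction i with
    | zero => rfl
    | succ i ih => rw [pow_succ', End.mul_apply, ih (by omega), hlow i (by omega)]
  have hdivX := aeval_iterate_divX_apply (u := fun j ↦ e (h + j)) hp (Nat.sub_le _ h) hhigh
  have htop : cyclicSpan D (e 0) = ⊤ := by
    rw [← top_le_iff, ← he, Submodule.span_le]
    rintro _ ⟨i, hi, rfl⟩
    rcases le_total i h with hih | hih
    · exact mem_cyclicSpan.2 ⟨X ^ i, by simp [hpow i hih]⟩
    · obtain ⟨j, rfl⟩ := Nat.exists_eq_add_of_le hih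
      refine mem_cyclicSpan.2 ⟨divX^[p.natDegree - j] p * X ^ h, ?_⟩
      rw [map_mul, map_pow, aeval_X, End.mul_apply, hpow h le_rfl]
      exact hdivX j (by simp only [Set.mem_Iio] at hi; omega)
  refine minpoly_eq_of_cyclicSpan_eq_top hp hdeg htop ?_
  have hlast := hdivX (p.natDegree - h) le_rfl
  rw [Nat.sub_sub_self hh, Nat.add_sub_cancel' hh, hend] at hlast
  have hsum : ∑ i ∈ Finset.range h, p.coeff i • (D ^ i) (e 0) =
      ∑ i ∈ Finset.range h, p.coeff i • e i :=
    Finset.sum_congr rfl fun i hi ↦ by rw [hpow i (Finset.mem_range.1 hi).le]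
  conv_lhs => rw [← iterate_divX_mul_X_pow_add_sum p h]
  simpa [hpow h le_rfl, hsum, Module.algebraMap_end_apply] using congr(
    $hlast + ∑ i ∈ Finset.range h, p.coeff i • e i)

theorem exists_minpoly_eq_of_span [FiniteDimensional K V] {n h : ℕ} (hn : finrank K V = n)
    (hh : h < n) {e : ℕ → V} (he : Submodule.span K (e '' Set.Iio n) = ⊤) {p : K[X]}
    (hp : p.Monic) (hdeg : p.natDegree = n) :
    ∃ D : End K V, minpoly K D = p ∧ (∀ i < h, D (e i) = e (i + 1)) ∧
      (∀ j, h + j + 1 < n → D (e (h + j)) = e (h + j + 1) - p.coeff (n - 1 - j) • e h) ∧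
      D (e (n - 1)) = -∑ i ∈ Finset.range (h + 1), p.coeff i • e i := by
  subst hdeg
  set n := p.natDegree
  let e' := Function.update e n (-∑ i ∈ Finset.range h, p.coeff i • e i)
  have he' (i : ℕ) (hi : i < n) : e' i = e i := Function.update_of_ne hi.ne _ _
  have hself : e' n = -∑ i ∈ Finset.range h, p.coeff i • e i := Function.update_self ..
  obtain ⟨D, hD⟩ := exists_linearMap_apply_eq_of_span hn he fun i ↦
    if i < h then e (i + 1) else e' (i + 1) - p.coeff (n - 1 - (i - h)) • e h
  have hlow (i : ℕ) (hi : i < h) : D (e i) = e (i + 1) := by rw [hD i (by omega), if_pos hi]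
  have hhigh (j : ℕ) (hj : h + j < n) :
      D (e (h + j)) = e' (h + j + 1) - p.coeff (n - 1 - j) • e h := by
    rw [hD _ hj, if_neg (by omega), Nat.add_sub_cancel_left]
  refine ⟨D, minpoly_eq_of_hook (e := e') hp hn.symm hh.le ?_ ?_ ?_ ?_, hlow, ?_, ?_⟩
  · rw [← he, show e' '' Set.Iio n = e '' Set.Iio n from Set.image_congr he']
  · intro i hi
    rw [he' i (by omega), he' (i + 1) (by omega), hlow i hi]
  · intro j hj
    rw [he' _ (by omega), he' h hh, hhigh j (by omega), add_assoc]
  · rw [Finset.sum_congr rfl fun i hi ↦ by rw [he' i (by rw [Finset.mem_range] at hi; omega)]]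
    exact hself
  · intro j hj
    rw [hhigh j (by omega), he' _ hj]
  · have hlast := hhigh (n - 1 - h) (by omega)
    rw [show h + (n - 1 - h) = n - 1 by omega, show n - 1 + 1 = n by omega,
      show n - 1 - (n - 1 - h) = h by omega] at hlast
    rw [hlast, Finset.sum_range_succ, neg_add, ← sub_eq_add_neg, hself]

end HookOperators

section KroneckerChains

open Module Submodule

variable {K V : Type*} [Field K] [AddCommGroup V] [Module K V]

theorem sup_span_singleton_eq_of_finrank_le [FiniteDimensional K V] {W Y : Submodule K V} {z : V}
    (hWY : W ≤ Y) (hz : z ∈ Y) (hzW : z ∉ W) (hdim : finrank K Y ≤ finrank K W + 1) :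
    W ⊔ K ∙ z = Y :=
  eq_of_le_of_finrank_le (sup_le hWY ((span_singleton_le_iff_mem _ _).2 hz))
    (by rwa [finrank_sup_span_singleton hzW])

theorem finrank_inf_ker_add_one [FiniteDimensional K V] {X : Submodule K V} {φ : V →ₗ[K] K}
    (hφ : ∃ x ∈ X, φ x ≠ 0) : finrank K ↥(X ⊓ LinearMap.ker φ) + 1 = finrank K X := by
  obtain ⟨x, hx, hφx⟩ := hφ
  have hne : φ ∘ₗ X.subtype ≠ 0 := fun h ↦ hφx congr($h ⟨x, hx⟩)
  rw [← Dual.finrank_ker_add_one_of_ne_zero hne, LinearMap.ker_comp, ← map_comap_subtype,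
    finrank_map_subtype_eq]

theorem exists_le_finrank_add_one [FiniteDimensional K V] {X : Submodule K V}
    (hX : 0 < finrank K X) : ∃ X' ≤ X, finrank K X' + 1 = finrank K X := by
  obtain ⟨x, hx, hx0⟩ := exists_mem_ne_zero_of_ne_bot (one_le_finrank_iff.1 hX)
  obtain ⟨φ, hφ, -⟩ := exists_le_ker_of_notMem (mt (mem_bot K).1 hx0)
  exact ⟨_, inf_le_left, finrank_inf_ker_add_one ⟨x, hx, hφ⟩⟩

theorem exists_mem_notMem_of_finrank_lt [FiniteDimensional K V] {X' X : Submodule K V}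
    (h : finrank K X' < finrank K X) : ∃ x ∈ X, x ∉ X' :=
  SetLike.not_le_iff_exists.1 fun hle ↦ (finrank_mono hle).not_gt h

theorem finrank_map_eq_of_injOn {F : End K V} {X : Submodule K V} (hF : Set.InjOn F X) :
    finrank K (X.map F) = finrank K X := by
  rw [← LinearMap.range_domRestrict]
  exact LinearMap.finrank_range_of_inj (Set.injOn_iff_injective.1 hF)

/-- A Kronecker chain for a pencil of linear maps `C, F : X → Y`: families `x₀, …, x_{d-1}`
spanning `X` and `y₀, …, y_d` spanning `Y`, such that `C` sends `xᵢ` to `yᵢ` and `F` sends `xᵢ`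
to `yᵢ₊₁`. The families are indexed by `ℕ`, and their values beyond these ranges are irrelevant. -/
structure IsKroneckerChain (C F : End K V) (X Y : Submodule K V) (d : ℕ) (x y : ℕ → V) :
    Prop where
  span_left : span K (x '' Set.Iio d) = X
  span_right : span K (y '' Set.Iio (d + 1)) = Y
  apply_left : ∀ i < d, C (x i) = y i
  apply_right : ∀ i < d, F (x i) = y (i + 1)

theorem span_image_Iio_succ (y : ℕ → V) (d : ℕ) :
    span K (y '' Set.Iio (d + 1)) = span K (y '' Set.Iio d) ⊔ K ∙ y d := by
  rw [← Order.succ_eq_add_one, Order.Iio_succ_eq_insert, Set.image_insert_eq, span_insert,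
    sup_comm]

theorem image_reflect_Iio {α : Type*} (y : ℕ → α) (d : ℕ) :
    (fun i ↦ y (d - 1 - i)) '' Set.Iio d = y '' Set.Iio d := by
  ext z
  constructor
  · rintro ⟨i, hi, rfl⟩
    exact ⟨d - 1 - i, by simp only [Set.mem_Iio] at hi ⊢; omega, rfl⟩
  · rintro ⟨i, hi, rfl⟩
    refine ⟨d - 1 - i, by simp only [Set.mem_Iio] at hi ⊢; omega, ?_⟩
    simp only [Nat.sub_sub_self (Nat.le_sub_one_of_lt hi)]

namespace IsKroneckerChain

variable {C F : End K V} {X Y : Submodule K V} {d : ℕ} {x y : ℕ → V}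

theorem left_mem (hc : IsKroneckerChain C F X Y d x y) {i : ℕ} (hi : i < d) : x i ∈ X :=
  hc.span_left ▸ subset_span ⟨i, hi, rfl⟩

theorem right_mem (hc : IsKroneckerChain C F X Y d x y) {i : ℕ} (hi : i ≤ d) : y i ∈ Y :=
  hc.span_right ▸ subset_span ⟨i, Nat.lt_succ_of_le hi, rfl⟩

theorem congr_left (hc : IsKroneckerChain C F X Y d x y) {C' : End K V}
    (h : ∀ u ∈ X, C' u = C u) : IsKroneckerChain C' F X Y d x y where
  __ := hc
  apply_left i hi := by rw [h _ (hc.left_mem hi), hc.apply_left i hi]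

theorem map_left_sup_span (hc : IsKroneckerChain C F X Y d x y) : X.map C ⊔ K ∙ y d = Y := by
  rw [← hc.span_right, span_image_Iio_succ, ← hc.span_left, map_span, ← Set.image_comp,
    show (C ∘ x) '' Set.Iio d = y '' Set.Iio d from Set.image_congr hc.apply_left]

theorem reverse (hc : IsKroneckerChain C F X Y d x y) :
    IsKroneckerChain F C X Y d (fun i ↦ x (d - 1 - i)) (fun i ↦ y (d - i)) where
  span_left := by rw [image_reflect_Iio, hc.span_left]
  span_right := (congrArg (span K) (image_reflect_Iio y (d + 1))).trans hc.span_right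
  apply_left i hi := by
    rw [hc.apply_right _ (by omega)]
    congr 1
    omega
  apply_right i hi := by
    rw [hc.apply_left _ (by omega)]
    congr 1
    omega

theorem comp_eq (hc : IsKroneckerChain C F X Y d x y) {A : End K V}
    (hA : ∀ i < d, A (y i) = y (i + 1)) {u : V} (hu : u ∈ X) : A (C u) = F u := by
  have hle : X ≤ LinearMap.eqLocus (A ∘ₗ C) F := by
    rw [← hc.span_left, span_le]
    rintro _ ⟨i, hi, rfl⟩
    rw [SetLike.mem_coe, LinearMap.mem_eqLocus, LinearMap.comp_apply, hc.apply_left i hi,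
      hA i hi, hc.apply_right i hi]
  exact hle hu

theorem snoc (hc : IsKroneckerChain C F X Y d x y) {f : V} (hf : C f = y d) :
    ∃ x' y', IsKroneckerChain C F (X ⊔ K ∙ f) (Y ⊔ K ∙ F f) (d + 1) x' y' := by
  have hx (i : ℕ) (hi : i < d) : Function.update x d f i = x i := Function.update_of_ne hi.ne _ _
  have hy (i : ℕ) (hi : i < d + 1) : Function.update y (d + 1) (F f) i = y i :=
    Function.update_of_ne hi.ne _ _
  refine ⟨Function.update x d f, Function.update y (d + 1) (F f), ?_, ?_, fun i hi ↦ ?_,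
    fun i hi ↦ ?_⟩
  · rw [span_image_Iio_succ, show _ '' Set.Iio d = _ from Set.image_congr hx, hc.span_left,
      Function.update_self]
  · rw [span_image_Iio_succ, show _ '' Set.Iio (d + 1) = _ from Set.image_congr hy,
      hc.span_right, Function.update_self]
  all_goals rcases Nat.lt_succ_iff_lt_or_eq.1 hi with hi' | rfl
  · rw [hx i hi', hy i hi, hc.apply_left i hi']
  · rw [hy _ hi, Function.update_self, hf]
  · rw [hx i hi', hy _ (by omega), hc.apply_right i hi']
  · simp only [Function.update_self]

variable [FiniteDimensional K V]

theorem right_last_notMem (hc : IsKroneckerChain C F X Y d x y)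
    (hdim : finrank K Y = finrank K X + 1) : y d ∉ X.map C := fun hmem ↦ by
  have hY := hc.map_left_sup_span
  rw [sup_eq_left.2 ((span_singleton_le_iff_mem _ _).2 hmem)] at hY
  have := finrank_map_le C X
  rw [hY] at this
  omega

theorem extend_right {X' Y' : Submodule K V} (hc : IsKroneckerChain C F X' Y' d x y)
    (hX : X' ≤ X) (hY : Y' ≤ Y) (hdim : finrank K Y' = finrank K X' + 1)
    (hdimX : finrank K X ≤ finrank K X' + 1) (hdimY : finrank K Y ≤ finrank K Y' + 1)
    (hC : X.map C = Y') (hF : X.map F ≤ Y) (hF' : ∀ u ∈ X, F u ∈ Y' → u ∈ X') :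
    ∃ x' y', IsKroneckerChain C F X Y (d + 1) x' y' := by
  obtain ⟨f, hfX, hf⟩ : y d ∈ X.map C := hC ▸ hc.right_mem le_rfl
  have hfX' : f ∉ X' := fun h ↦ hc.right_last_notMem hdim (hf ▸ mem_map_of_mem h)
  rw [← sup_span_singleton_eq_of_finrank_le hX hfX hfX' hdimX,
    ← sup_span_singleton_eq_of_finrank_le hY (hF (mem_map_of_mem hfX)) (mt (hF' f hfX) hfX') hdimY]
  exact hc.snoc hf

end IsKroneckerChain

theorem exists_eqOn_apply_eq {X' : Submodule K V} (C : End K V) {x : V} (hx : x ∉ X') (z : V) :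
    ∃ C' : End K V, (∀ u ∈ X', C' u = C u) ∧ C' x = z := by
  obtain ⟨C', hC', hC'x⟩ := LinearMap.exists_extend_of_notMem (C ∘ₗ X'.subtype) hx z
  exact ⟨C', fun u hu ↦ congr($hC' ⟨u, hu⟩), hC'x⟩

theorem map_eq_map_of_eqOn {C C' : End K V} {X : Submodule K V} (h : ∀ u ∈ X, C' u = C u) :
    X.map C' = X.map C :=
  SetLike.coe_injective (Set.image_congr h)

theorem IsKroneckerChain.exists_eqOn_map_eq {C F : End K V} {X Y : Submodule K V} {d : ℕ}
    {x y : ℕ → V} (hc : IsKroneckerChain C F X Y d x y) {u : V} (hu : u ∉ X) :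
    ∃ C' : End K V, (∀ v ∈ X, C' v = C v) ∧ (X ⊔ K ∙ u).map C' = Y := by
  obtain ⟨C', hC', hC'u⟩ := exists_eqOn_apply_eq C hu (y d)
  refine ⟨C', hC', ?_⟩
  rw [Submodule.map_sup, map_span, Set.image_singleton, hC'u, map_eq_map_of_eqOn hC',
    hc.map_left_sup_span]

theorem exists_eqOn_transverse {C : End K V} {X Y Y' : Submodule K V} (hC : X.map C ≤ Y)
    (hYY' : Y < Y') {u : V} (hu : u ∉ X) :
    ∃ C' : End K V, (∀ v ∈ X, C' v = C v) ∧ (X ⊔ K ∙ u).map C' ≤ Y' ∧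
      ∀ v ∈ X ⊔ K ∙ u, C' v ∈ Y → v ∈ X := by
  obtain ⟨z, hzY', hzY⟩ := SetLike.exists_of_lt hYY'
  obtain ⟨C', hC', hC'u⟩ := exists_eqOn_apply_eq C hu z
  refine ⟨C', hC', ?_, fun v hv hCv ↦ ?_⟩
  · rw [Submodule.map_sup, map_span, Set.image_singleton, hC'u, map_eq_map_of_eqOn hC']
    exact sup_le (hC.trans hYY'.le) ((span_singleton_le_iff_mem _ _).2 hzY')
  · obtain ⟨a, ha, w, hw, rfl⟩ := mem_sup.1 hv
    obtain ⟨c, rfl⟩ := mem_span_singleton.1 hw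
    rw [map_add, map_smul, hC' a ha, hC'u,
      Y.add_mem_iff_right (hC (mem_map_of_mem ha))] at hCv
    rcases eq_or_ne c 0 with rfl | hc
    · simpa using ha
    · exact absurd ((Y.smul_mem_iff hc).1 hCv) hzY

/-- The pencils `(C, F₁)` and `(C, F₂)` on `X → Y` both admit a Kronecker chain, for one and the
same map `C`. -/
def HaveCommonKroneckerChain (F₁ F₂ : End K V) (X Y : Submodule K V) (d : ℕ) : Prop :=
  ∃ C, (∃ x y, IsKroneckerChain C F₁ X Y d x y) ∧ ∃ x y, IsKroneckerChain C F₂ X Y d x y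

variable [FiniteDimensional K V]

theorem HaveCommonKroneckerChain.extend_right {F₁ F₂ : End K V} {d : ℕ}
    {X X' Y Y' : Submodule K V} (hc : HaveCommonKroneckerChain F₁ F₂ X' Y' d) (hX : X' ≤ X)
    (hY : Y' ≤ Y) (hdim : finrank K Y' = finrank K X' + 1)
    (hdimX : finrank K X = finrank K X' + 1) (hdimY : finrank K Y = finrank K Y' + 1)
    (hF₁ : X.map F₁ ≤ Y) (hF₁' : ∀ u ∈ X, F₁ u ∈ Y' → u ∈ X')
    (hF₂ : X.map F₂ ≤ Y) (hF₂' : ∀ u ∈ X, F₂ u ∈ Y' → u ∈ X') :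
    HaveCommonKroneckerChain F₁ F₂ X Y (d + 1) := by
  obtain ⟨x, hx, hxX'⟩ := exists_mem_notMem_of_finrank_lt (X' := X') (X := X) (by omega)
  obtain ⟨C', ⟨x₁, y₁, h₁⟩, x₂, y₂, h₂⟩ := hc
  obtain ⟨C, hC, hCX⟩ := h₁.exists_eqOn_map_eq hxX'
  rw [sup_span_singleton_eq_of_finrank_le hX hx hxX' hdimX.le] at hCX
  exact ⟨C, (h₁.congr_left hC).extend_right hX hY hdim hdimX.le hdimY.le hCX hF₁ hF₁',
    (h₂.congr_left hC).extend_right hX hY hdim hdimX.le hdimY.le hCX hF₂ hF₂'⟩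

theorem HaveCommonKroneckerChain.extend_left {F₁ F₂ : End K V} {d : ℕ}
    {X X' Y Y' : Submodule K V} (hc : HaveCommonKroneckerChain F₁ F₂ X' Y' d) (hX : X' ≤ X)
    (hY : Y' < Y) (hdim : finrank K Y' = finrank K X' + 1)
    (hdimX : finrank K X = finrank K X' + 1) (hdimY : finrank K Y = finrank K Y' + 1)
    (hF₁ : X.map F₁ = Y') (hF₂ : X.map F₂ = Y') :
    HaveCommonKroneckerChain F₁ F₂ X Y (d + 1) := by
  obtain ⟨x, hx, hxX'⟩ := exists_mem_notMem_of_finrank_lt (X' := X') (X := X) (by omega)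
  obtain ⟨C', ⟨x₁, y₁, h₁⟩, x₂, y₂, h₂⟩ := hc
  obtain ⟨C, hC, hCX, hC'⟩ :=
    exists_eqOn_transverse (h₁.map_left_sup_span ▸ le_sup_left) hY hxX'
  rw [sup_span_singleton_eq_of_finrank_le hX hx hxX' hdimX.le] at hCX hC'
  have hextend {F : End K V} {x y : ℕ → V} (hF : X.map F = Y')
      (hc : IsKroneckerChain C' F X' Y' d x y) :
      ∃ x y, IsKroneckerChain C F X Y (d + 1) x y := by
    obtain ⟨_, _, hc'⟩ :=
      (hc.congr_left hC).reverse.extend_right hX hY.le hdim hdimX.le hdimY.le hF hCX hC'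
    exact ⟨_, _, hc'.reverse⟩
  exact ⟨C, hextend hF₁ h₁, hextend hF₂ h₂⟩

theorem haveCommonKroneckerChain_zero (F₁ F₂ : End K V) {X Y : Submodule K V}
    (hX : finrank K X = 0) (hY : finrank K Y = 1) : HaveCommonKroneckerChain F₁ F₂ X Y 0 := by
  obtain ⟨z, hz, hz0⟩ := exists_mem_ne_zero_of_ne_bot (one_le_finrank_iff.1 hY.ge)
  have hY' : K ∙ z = Y := by
    rw [← bot_sup_eq (K ∙ z)]
    exact sup_span_singleton_eq_of_finrank_le bot_le hz (mt (mem_bot K).1 hz0)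
      (by rw [hY, finrank_bot])
  have hchain (F : End K V) : IsKroneckerChain 0 F X Y 0 0 fun _ ↦ z :=
    { span_left := by
        simp only [Submodule.finrank_eq_zero.1 hX, not_lt_zero, Set.Iio, Set.ofPred_false,
          Set.image_empty, span_empty]
      span_right := by
        rw [← hY', Set.Nonempty.image_const ⟨0, Nat.one_pos⟩]
      apply_left := fun _ hi ↦ absurd hi (Nat.not_lt_zero _)
      apply_right := fun _ hi ↦ absurd hi (Nat.not_lt_zero _) }
  exact ⟨0, ⟨_, _, hchain F₁⟩, _, _, hchain F₂⟩

theorem exists_functional_eqOn_comp (F₁ F₂ : End K V) {X Y : Submodule K V}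
    (h : finrank K X < finrank K Y) :
    ∃ φ : V →ₗ[K] K, (∃ y ∈ Y, φ y ≠ 0) ∧ ∀ u ∈ X, φ (F₁ u) = φ (F₂ u) := by
  -- the image of `F₁ - F₂` is too small to fill `Y`
  obtain ⟨y, hy, hyX⟩ := exists_mem_notMem_of_finrank_lt (X' := X.map (F₁ - F₂)) (X := Y)
    ((finrank_map_le _ _).trans_lt h)
  obtain ⟨φ, hφy, hφ⟩ := exists_le_ker_of_notMem hyX
  refine ⟨φ, ⟨y, hy, hφy⟩, fun u hu ↦ sub_eq_zero.1 ?_⟩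
  rw [← map_sub]
  exact hφ (mem_map_of_mem hu)

theorem haveCommonKroneckerChain_of_injOn {F₁ F₂ : End K V} {d : ℕ} {X Y : Submodule K V}
    (hX : finrank K X = d) (hY : finrank K Y = d + 1) (hF₁ : Set.InjOn F₁ X)
    (hF₂ : Set.InjOn F₂ X) (hXY₁ : ∀ u ∈ X, F₁ u ∈ Y) (hXY₂ : ∀ u ∈ X, F₂ u ∈ Y) :
    HaveCommonKroneckerChain F₁ F₂ X Y d := by
  induction d generalizing X Y with
  | zero => exact haveCommonKroneckerChain_zero F₁ F₂ hX hY
  | succ d ih =>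
    obtain ⟨φ, ⟨y, hy, hφy⟩, hφ⟩ :=
      exists_functional_eqOn_comp F₁ F₂ (X := X) (Y := Y) (by omega)
    have hY' := finrank_inf_ker_add_one ⟨y, hy, hφy⟩
    by_cases h : ∃ x ∈ X, φ (F₁ x) ≠ 0
    · have hX' := finrank_inf_ker_add_one (φ := φ ∘ₗ F₁) h
      have hc := ih (X := X ⊓ LinearMap.ker (φ ∘ₗ F₁)) (Y := Y ⊓ LinearMap.ker φ) (by omega)
        (by omega) (hF₁.mono fun _ h ↦ h.1) (hF₂.mono fun _ h ↦ h.1)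
        (fun u hu ↦ ⟨hXY₁ u hu.1, hu.2⟩)
        (fun u hu ↦ ⟨hXY₂ u hu.1, (hφ u hu.1).symm.trans hu.2⟩)
      exact hc.extend_right inf_le_left inf_le_left (by omega) hX'.symm hY'.symm
        (map_le_iff_le_comap.2 hXY₁) (fun u hu hFu ↦ ⟨hu, hFu.2⟩)
        (map_le_iff_le_comap.2 hXY₂) (fun u hu hFu ↦ ⟨hu, (hφ u hu).trans hFu.2⟩)
    · push Not at h
      obtain ⟨X', hX'X, hX'⟩ := exists_le_finrank_add_one (X := X) (by omega)
      have hFX {F : End K V} (hF : Set.InjOn F X) (hXY : ∀ u ∈ X, F u ∈ Y)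
          (hφF : ∀ u ∈ X, φ (F u) = 0) : X.map F = Y ⊓ LinearMap.ker φ :=
        eq_of_le_of_finrank_le (map_le_iff_le_comap.2 fun u hu ↦ ⟨hXY u hu, hφF u hu⟩)
          (by rw [finrank_map_eq_of_injOn hF]; omega)
      have hFX₁ := hFX hF₁ hXY₁ h
      have hFX₂ := hFX hF₂ hXY₂ fun u hu ↦ (hφ u hu).symm.trans (h u hu)
      have hc := ih (X := X') (Y := Y ⊓ LinearMap.ker φ) (by omega) (by omega) (hF₁.mono hX'X)
        (hF₂.mono hX'X) (fun u hu ↦ hFX₁ ▸ mem_map_of_mem (hX'X hu))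
        (fun u hu ↦ hFX₂ ▸ mem_map_of_mem (hX'X hu))
      exact hc.extend_left hX'X (inf_le_left.lt_of_not_ge fun hle ↦ hφy (hle hy).2) (by omega)
        hX'.symm hY'.symm hFX₁ hFX₂

theorem exists_eqOn_span_image_eq_top {P : ℕ → V → Prop} {e : ℕ → V} {k m : ℕ}
    (hm : finrank K V = finrank K (span K (e '' Set.Iio k)) + m) (hP : ∀ i < k, P i (e i))
    (hstep : ∀ (f : ℕ → V) (j : ℕ), k ≤ j → j < k + m → (∀ i < k, f i = e i) →
      (∀ i < j, P i (f i)) → span K (f '' Set.Iio j) ≠ ⊤ → ∃ z ∉ span K (f '' Set.Iio j), P j z) :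
    ∃ e' : ℕ → V, (∀ i < k, e' i = e i) ∧ span K (e' '' Set.Iio (k + m)) = ⊤ ∧
      ∀ i < k + m, P i (e' i) := by
  induction m generalizing e k with
  | zero => exact ⟨e, fun _ _ ↦ rfl, eq_top_of_finrank_eq hm.symm, hP⟩
  | succ m ih =>
    obtain ⟨z, hz, hPz⟩ := hstep e k le_rfl (by omega) (fun _ _ ↦ rfl) hP fun htop ↦ by
      rw [htop, finrank_top] at hm
      omega
    let f := Function.update e k z
    have hf (i : ℕ) (hi : i < k) : f i = e i := Function.update_of_ne hi.ne _ _
    have hfk : f k = z := Function.update_self _ _ _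
    have hspan : finrank K (span K (f '' Set.Iio (k + 1))) =
        finrank K (span K (e '' Set.Iio k)) + 1 := by
      rw [span_image_Iio_succ, show f '' Set.Iio k = _ from Set.image_congr hf, hfk,
        finrank_sup_span_singleton hz]
    rw [← add_assoc, add_right_comm] at hstep ⊢
    obtain ⟨e', he', htop, hP'⟩ := ih (e := f) (k := k + 1) (by omega)
      (fun i hi ↦ by
        rcases Nat.lt_succ_iff_lt_or_eq.1 hi with hi | rfl
        · exact hf i hi ▸ hP i hi
        · exact hfk ▸ hPz)
      fun g j hj hjm hg ↦ hstep g j (by omega) hjm fun i hi ↦ (hg i (by omega)).trans (hf i hi)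
    exact ⟨e', fun i hi ↦ (he' i (by omega)).trans (hf i hi), htop, hP'⟩

theorem exists_eqOn_span_image_eq_top_of_sup {e : ℕ → V} {k m : ℕ} {W Z : Submodule K V}
    (he : span K (e '' Set.Iio k) = W) (hWZ : W ⊔ Z = ⊤) (hm : finrank K V = finrank K W + m) :
    ∃ e' : ℕ → V, (∀ i < k, e' i = e i) ∧ span K (e' '' Set.Iio (k + m)) = ⊤ ∧
      ∀ i, k ≤ i → i < k + m → e' i ∈ Z := by
  subst he
  obtain ⟨e', he', htop, hZ⟩ := exists_eqOn_span_image_eq_top (P := fun i z ↦ k ≤ i → z ∈ Z) hm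
    (fun i hi hki ↦ absurd hki hi.not_ge) fun f j hkj _ hf _ hne ↦ by
      have hle : span K (e '' Set.Iio k) ≤ span K (f '' Set.Iio j) := by
        rw [← show f '' Set.Iio k = _ from Set.image_congr hf]
        exact span_mono (Set.image_mono (Set.Iio_subset_Iio hkj))
      obtain ⟨z, hz, hzf⟩ := SetLike.not_le_iff_exists.1 fun hZ ↦
        hne (top_le_iff.1 (hWZ ▸ sup_le hle hZ))
      exact ⟨z, hzf, fun _ ↦ hz⟩
  exact ⟨e', he', htop, fun i hki hi ↦ hZ i hi hki⟩

end KroneckerChains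

section CoupledPairs

open Module Submodule

variable {K V : Type*} [Field K] [AddCommGroup V] [Module K V]

/-- The data that symplectic geometry induces on a Lagrangian `V` carrying a symplectic map `M`:
`b x y = ω(x, M y)`, `H = V ∩ M⁻¹V`, and `N` restricts to `M` on `H`. -/
structure IsCouplingDatum (b : LinearMap.BilinForm K V) (H : Submodule K V) (N : End K V) :
    Prop where
  injOn : Set.InjOn N H
  mapsTo : ∀ x ∈ H, N x ∈ H
  left_eq_zero : ∀ x ∈ H, ∀ y, b x y = 0
  right_eq_zero : ∀ x, ∀ y ∈ H, b x y = 0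

/-- The compatibility between endomorphisms `D` and `A` of a Lagrangian under which they extend to
symplectic maps `Y` and `M ∘ Y` of the ambient space. -/
structure IsCoupled (b : LinearMap.BilinForm K V) (H : Submodule K V) (N D A : End K V) :
    Prop where
  symm : ∀ u w, b (A u) (D w) = b (A w) (D u)
  apply_eq : ∀ u, D u ∈ H → A u = N (D u)

/-- There are coupled endomorphisms with minimal polynomials `p` and `q`. -/
def HasCoupledPair (b : LinearMap.BilinForm K V) (H : Submodule K V) (N : End K V)
    (p q : K[X]) : Prop :=
  ∃ D A : End K V, minpoly K D = p ∧ minpoly K A = q ∧ IsCoupled b H N D A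

theorem apply_eq_apply_of_span_eq_top {b : LinearMap.BilinForm K V} {D A : End K V} {n : ℕ}
    {e : ℕ → V} (he : span K (e '' Set.Iio n) = ⊤)
    (h : ∀ i < n, ∀ j < n, b (A (e i)) (D (e j)) = b (A (e j)) (D (e i))) (u w : V) :
    b (A u) (D w) = b (A w) (D u) := by
  have hflip : b.compl₁₂ A D = (b.compl₁₂ A D).flip := by
    refine LinearMap.ext_on he ?_
    rintro _ ⟨i, hi, rfl⟩
    refine LinearMap.ext_on he ?_
    rintro _ ⟨j, hj, rfl⟩
    exact h i hi j hj
  exact congr($hflip u w)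

theorem injective_of_coeff_minpoly_ne_zero [FiniteDimensional K V] {D : End K V}
    (h : (minpoly K D).coeff 0 ≠ 0) : Function.Injective D := by
  refine (injective_iff_map_eq_zero D).2 fun x hx ↦ by_contra fun hx0 ↦ h ?_
  have hroot : (minpoly K D).IsRoot 0 ↔ ∃ m, m ≠ 0 ∧ D m = 0 :=
    (LinearMap.hasEigenvalue_zero_tfae D).out 1 5
  rw [coeff_zero_eq_eval_zero]
  exact hroot.2 ⟨x, hx0, hx⟩

/-- Modulo `H`, the map `D` permutes `e 0, …, e (n - 1)` cyclically up to the factor `c` picked up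
at the last step. -/
structure IsCyclicModulo (H : Submodule K V) (D : End K V) (n : ℕ) (e : ℕ → V) (c : K) :
    Prop where
  succ : ∀ i, i + 1 < n → D (e i) ≡ e (i + 1) [SMOD H]
  last : D (e (n - 1)) ≡ c • e 0 [SMOD H]

theorem exists_isCyclicModulo [FiniteDimensional K V] {n h : ℕ} (hn : finrank K V = n)
    (hh : 1 ≤ h) (hhn : h < n) {H : Submodule K V} {e : ℕ → V}
    (he : span K (e '' Set.Iio n) = ⊤) (heH : ∀ i < h, e (i + 1) ∈ H) {p : K[X]} (hp : p.Monic)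
    (hdeg : p.natDegree = n) :
    ∃ D : End K V, minpoly K D = p ∧ (∀ i < h, D (e i) = e (i + 1)) ∧
      IsCyclicModulo H D n e (-p.coeff 0) := by
  obtain ⟨D, hD, hlow, hhigh, hlast⟩ := exists_minpoly_eq_of_span hn hhn he hp hdeg
  have heh : e h ∈ H := by simpa [Nat.sub_add_cancel hh] using heH (h - 1) (by omega)
  refine ⟨D, hD, hlow, fun i hi ↦ ?_, ?_⟩
  · rcases lt_or_ge i h with hih | hih
    · rw [hlow i hih]
    · obtain ⟨j, rfl⟩ := Nat.exists_eq_add_of_le hih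
      rw [hhigh j hi, SModEq.sub_mem, sub_sub_cancel_left]
      exact H.neg_mem (H.smul_mem _ heh)
  · rw [hlast, Finset.sum_range_succ', SModEq.sub_mem, neg_smul, sub_neg_eq_add, neg_add,
      neg_add_cancel_right]
    exact H.neg_mem (H.sum_mem fun i hi ↦ H.smul_mem _ (heH i (Finset.mem_range.1 hi)))

namespace IsCouplingDatum

variable {b : LinearMap.BilinForm K V} {H : Submodule K V} {N : End K V}

theorem apply_congr (hd : IsCouplingDatum b H N) {x x' y y' : V} (hx : x ≡ x' [SMOD H])
    (hy : y ≡ y' [SMOD H]) : b x y = b x' y' := by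
  have hx' := hd.left_eq_zero _ (SModEq.sub_mem.1 hx) y
  have hy' := hd.right_eq_zero x' _ (SModEq.sub_mem.1 hy)
  rw [map_sub, LinearMap.sub_apply, sub_eq_zero] at hx'
  rw [map_sub, sub_eq_zero] at hy'
  rw [hx', hy']

end IsCouplingDatum

/-- Kronecker chains of the pencils `(C, id)` and `(C, N)` from `H` to a subspace `Y` in which `H`
is a hyperplane; `t` and `s` are the families they induce on `Y`. -/
structure IsChainPair (C : End K V) (H Y : Submodule K V) (N : End K V) (h : ℕ) (t s : ℕ → V) :
    Prop where
  finrank_left : finrank K H = h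
  finrank_right : finrank K Y = h + 1
  chain_id : ∃ x, IsKroneckerChain C 1 H Y h x t
  chain : ∃ x, IsKroneckerChain C N H Y h x s

theorem IsCouplingDatum.exists_isChainPair [FiniteDimensional K V]
    {b : LinearMap.BilinForm K V} {H Y : Submodule K V} {N : End K V}
    (hd : IsCouplingDatum b H N) (hHY : H ≤ Y) (hY : finrank K Y = finrank K H + 1) :
    ∃ C t s, IsChainPair C H Y N (finrank K H) t s := by
  obtain ⟨C, ⟨x, t, ht⟩, y, s, hs⟩ := haveCommonKroneckerChain_of_injOn (F₁ := 1) rfl hY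
    (fun _ _ _ _ h ↦ h) hd.injOn (fun u hu ↦ hHY hu) fun u hu ↦ hHY (hd.mapsTo u hu)
  exact ⟨C, t, s, rfl, hY, ⟨x, ht⟩, y, hs⟩

namespace IsChainPair

variable {C N : End K V} {H Y : Submodule K V} {h : ℕ} {t s : ℕ → V}

theorem succ_mem_left (hc : IsChainPair C H Y N h t s) {i : ℕ} (hi : i < h) : t (i + 1) ∈ H := by
  obtain ⟨x, hx⟩ := hc.chain_id
  rw [← hx.apply_right i hi]
  exact hx.left_mem hi

theorem succ_mem_right (hc : IsChainPair C H Y N h t s) (hN : ∀ x ∈ H, N x ∈ H) {i : ℕ}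
    (hi : i < h) : s (i + 1) ∈ H := by
  obtain ⟨x, hx⟩ := hc.chain
  rw [← hx.apply_right i hi]
  exact hN _ (hx.left_mem hi)

theorem span_left (hc : IsChainPair C H Y N h t s) : span K (t '' Set.Iio (h + 1)) = Y :=
  hc.chain_id.choose_spec.span_right

theorem span_right (hc : IsChainPair C H Y N h t s) : span K (s '' Set.Iio (h + 1)) = Y :=
  hc.chain.choose_spec.span_right

theorem sup_span_left_zero (hc : IsChainPair C H Y N h t s) : H ⊔ K ∙ t 0 = Y := by
  obtain ⟨x, hx⟩ := hc.chain_id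
  simpa [Module.End.one_eq_id] using hx.reverse.map_left_sup_span

theorem exists_smodEq_smul_left_zero (hc : IsChainPair C H Y N h t s) {y : V} (hy : y ∈ Y) :
    ∃ c : K, y ≡ c • t 0 [SMOD H] := by
  rw [← hc.sup_span_left_zero] at hy
  obtain ⟨a, ha, w, hw, rfl⟩ := mem_sup.1 hy
  obtain ⟨c, rfl⟩ := mem_span_singleton.1 hw
  exact ⟨c, SModEq.sub_mem.2 (by rwa [add_sub_cancel_right])⟩

theorem exists_smodEq_right_zero (hc : IsChainPair C H Y N h t s) :
    ∃ c : K, s 0 ≡ c • t 0 [SMOD H] := by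
  refine hc.exists_smodEq_smul_left_zero ?_
  rw [← hc.span_right]
  exact subset_span (Set.mem_image_of_mem s h.succ_pos)

theorem exists_smodEq_apply_right_last [FiniteDimensional K V]
    (hc : IsChainPair C H Y N h t s) :
    ∃ ρ : K, ρ ≠ 0 ∧
      ∀ A : End K V, (∀ u ∈ H, A (C u) ∈ H) → A (s h) ≡ ρ • A (t h) [SMOD H] := by
  obtain ⟨x, hx⟩ := hc.chain_id
  obtain ⟨y, hy⟩ := hc.chain
  have hmem : s h ∈ H.map C ⊔ K ∙ t h := hx.map_left_sup_span ▸ hy.right_mem le_rfl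
  obtain ⟨_, ⟨a, ha, rfl⟩, w, hw, hsh⟩ := mem_sup.1 hmem
  obtain ⟨ρ, rfl⟩ := mem_span_singleton.1 hw
  refine ⟨ρ, ?_, fun A hA ↦ SModEq.sub_mem.2 ?_⟩
  swap
  · rw [← hsh, map_add, map_smul, add_sub_cancel_right]
    exact hA a ha
  rintro rfl
  have hdim : finrank K Y = finrank K H + 1 := by rw [hc.finrank_left, hc.finrank_right]
  exact hy.right_last_notMem hdim ⟨a, ha, by rw [← hsh, zero_smul, add_zero]⟩

theorem span_image_eq_top (hc : IsChainPair C H Y N h t s) {n : ℕ} (hhn : h < n)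
    {e e' : ℕ → V} (he : span K (e '' Set.Iio n) = ⊤) (het : ∀ i ≤ h, e i = t i)
    (hes : ∀ i ≤ h, e' i = s i) (hee' : ∀ i, h < i → i < n → e i ∈ Y ⊔ K ∙ e' i) :
    span K (e' '' Set.Iio n) = ⊤ := by
  have hY : Y ≤ span K (e' '' Set.Iio n) := by
    rw [← hc.span_right, span_le]
    rintro _ ⟨i, hi, rfl⟩
    have hih : i ≤ h := Nat.le_of_lt_succ hi
    exact subset_span ⟨i, hih.trans_lt hhn, hes i hih⟩
  rw [← top_le_iff, ← he, span_le]
  rintro _ ⟨i, hi, rfl⟩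
  rcases le_or_gt i h with hih | hih
  · rw [het i hih]
    exact hY (hc.span_left ▸ subset_span ⟨i, Nat.lt_succ_of_le hih, rfl⟩)
  · exact sup_le hY ((span_singleton_le_iff_mem _ _).2 (subset_span ⟨i, hi, rfl⟩)) (hee' i hih hi)

theorem exists_hooks [FiniteDimensional K V] (hc : IsChainPair C H Y N h t s)
    (hN : ∀ x ∈ H, N x ∈ H) (hh : 1 ≤ h) {n : ℕ} (hn : finrank K V = n) (hhn : h < n)
    {e e' : ℕ → V} (he : span K (e '' Set.Iio n) = ⊤) (het : ∀ i ≤ h, e i = t i)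
    (he' : span K (e' '' Set.Iio n) = ⊤) (hes : ∀ i ≤ h, e' i = s i) {p q : K[X]}
    (hp : p.Monic) (hpn : p.natDegree = n) (hp0 : p.coeff 0 ≠ 0)
    (hq : q.Monic) (hqn : q.natDegree = n) :
    ∃ D A : End K V, minpoly K D = p ∧ minpoly K A = q ∧ (∀ u, D u ∈ H → A u = N (D u)) ∧
      (∀ u ∈ H, A (C u) ∈ H) ∧ (∀ i < h, D (e i) ∈ H) ∧
      IsCyclicModulo H D n e (-p.coeff 0) ∧ IsCyclicModulo H A n e' (-q.coeff 0) := by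
  have heH (i : ℕ) (hi : i < h) : e (i + 1) ∈ H := by
    rw [het _ hi]
    exact hc.succ_mem_left hi
  have heH' (i : ℕ) (hi : i < h) : e' (i + 1) ∈ H := by
    rw [hes _ hi]
    exact hc.succ_mem_right hN hi
  obtain ⟨D, rfl, hDlow, hDhook⟩ := exists_isCyclicModulo hn hh hhn he heH hp hpn
  obtain ⟨A, rfl, hAlow, hAhook⟩ := exists_isCyclicModulo hn hh hhn he' heH' hq hqn
  obtain ⟨x, hx⟩ := hc.chain_id
  obtain ⟨y, hy⟩ := hc.chain
  have hDC (u : V) (hu : u ∈ H) : D (C u) = u :=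
    hx.comp_eq (fun i hi ↦ by rw [← het i hi.le, hDlow i hi, het _ hi]) hu
  have hAC (u : V) (hu : u ∈ H) : A (C u) = N u :=
    hy.comp_eq (fun i hi ↦ by rw [← hes i hi.le, hAlow i hi, hes _ hi]) hu
  refine ⟨D, A, rfl, rfl, fun u hu ↦ ?_, fun u hu ↦ hAC u hu ▸ hN u hu,
    fun i hi ↦ hDlow i hi ▸ heH i hi, hDhook, hAhook⟩
  rw [← hAC _ hu, injective_of_coeff_minpoly_ne_zero hp0 (hDC _ hu)]

end IsChainPair

theorem IsCouplingDatum.isCoupled_of_span {b : LinearMap.BilinForm K V} {H : Submodule K V}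
    {N D A : End K V} (hd : IsCouplingDatum b H N) {n h : ℕ} {e : ℕ → V}
    (he : span K (e '' Set.Iio n) = ⊤) (hA : ∀ u, D u ∈ H → A u = N (D u))
    (hlow : ∀ i < h, D (e i) ∈ H)
    (hsymm : ∀ i j, h ≤ i → i < j → j < n → b (A (e i)) (D (e j)) = b (A (e j)) (D (e i))) :
    IsCoupled b H N D A := by
  have hAlow (i : ℕ) (hi : i < h) : A (e i) ∈ H := hA _ (hlow i hi) ▸ hd.mapsTo _ (hlow i hi)
  have hlt (i j : ℕ) (hij : i < j) (hj : j < n) :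
      b (A (e i)) (D (e j)) = b (A (e j)) (D (e i)) := by
    rcases lt_or_ge i h with hi | hi
    · rw [hd.left_eq_zero _ (hAlow i hi), hd.right_eq_zero _ _ (hlow i hi)]
    · exact hsymm i j hi hij hj
  refine ⟨apply_eq_apply_of_span_eq_top he fun i hi j hj ↦ ?_, hA⟩
  rcases lt_trichotomy i j with hij | rfl | hij
  · exact hlt i j hij hj
  · rfl
  · exact (hlt j i hij hi).symm

theorem IsChainPair.hasCoupledPair_of_orthogonal [FiniteDimensional K V]
    {b : LinearMap.BilinForm K V} {C N : End K V} {H Y : Submodule K V} {h : ℕ} {t s : ℕ → V}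
    (hc : IsChainPair C H Y N h t s) (hd : IsCouplingDatum b H N) (hb : ∀ x y, b x y = b y x)
    (hh : 1 ≤ h) {n : ℕ} (hn : finrank K V = n) (hhn : h < n) {e : ℕ → V}
    (he : span K (e '' Set.Iio n) = ⊤) (het : ∀ i ≤ h, e i = t i)
    (horth : ∀ i, h < i → i < n → b (e 0) (e i) = 0) {p q : K[X]} (hp : p.Monic)
    (hpn : p.natDegree = n) (hp0 : p.coeff 0 ≠ 0) (hq : q.Monic) (hqn : q.natDegree = n) :
    HasCoupledPair b H N p q := by
  obtain ⟨ρ, hρ, hAρ⟩ := hc.exists_smodEq_apply_right_last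
  obtain ⟨κ, hκ⟩ := hc.exists_smodEq_right_zero
  let e' (i : ℕ) : V := if i ≤ h then s i else ρ • e i
  have hes (i : ℕ) (hi : i ≤ h) : e' i = s i := if_pos hi
  have heρ (i : ℕ) (hi : h < i) : e' i = ρ • e i := if_neg hi.not_ge
  have he' : span K (e' '' Set.Iio n) = ⊤ := hc.span_image_eq_top hhn he het hes fun i hi _ ↦
    mem_sup_right (mem_span_singleton.2 ⟨ρ⁻¹, by rw [heρ i hi, inv_smul_smul₀ hρ]⟩)
  obtain ⟨D, A, hD, hA, hDA, hAC, hDlow, hDcyc, hAcyc⟩ :=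
    hc.exists_hooks hd.mapsTo hh hn hhn he het he' hes hp hpn hp0 hq hqn
  have hAe (i : ℕ) (hi : h ≤ i) : A (e i) ≡ ρ⁻¹ • A (e' i) [SMOD H] := by
    rcases hi.eq_or_lt with rfl | hi
    · rw [hes h le_rfl, het h le_rfl]
      simpa only [inv_smul_smul₀ hρ] using (hAρ A hAC).symm.smul ρ⁻¹
    · rw [heρ i hi, map_smul, inv_smul_smul₀ hρ]
  have hA_succ (i : ℕ) (hi : h ≤ i) (hin : i + 1 < n) : A (e i) ≡ e (i + 1) [SMOD H] := by
    simpa only [heρ (i + 1) (by omega), inv_smul_smul₀ hρ] using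
      (hAe i hi).trans ((hAcyc.succ i hin).smul ρ⁻¹)
  have hA_last : A (e (n - 1)) ≡ ρ⁻¹ • -q.coeff 0 • κ • e 0 [SMOD H] := by
    rw [het 0 h.zero_le]
    exact (hAe _ (by omega)).trans
      ((hAcyc.last.trans ((hes 0 h.zero_le ▸ hκ).smul _)).smul ρ⁻¹)
  refine ⟨D, A, hD, hA, hd.isCoupled_of_span he hDA hDlow fun i j hi hij hj ↦ ?_⟩
  have horth' : b (e (i + 1)) (e 0) = 0 := by rw [hb, horth _ (by omega) (by omega)]
  rw [hd.apply_congr (hA_succ i hi (by omega)) SModEq.rfl,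
    hd.apply_congr SModEq.rfl (hDcyc.succ i (by omega))]
  obtain hjn | rfl : j + 1 < n ∨ j = n - 1 := by omega
  · rw [hd.apply_congr SModEq.rfl (hDcyc.succ j hjn),
      hd.apply_congr (hA_succ j (by omega) hjn) SModEq.rfl, hb]
  · rw [hd.apply_congr SModEq.rfl hDcyc.last, hd.apply_congr hA_last SModEq.rfl]
    simp only [map_smul, LinearMap.smul_apply, horth', horth (i + 1) (by omega) (by omega),
      smul_zero]

theorem IsChainPair.exists_twisted_extension [FiniteDimensional K V] {C N : End K V}
    {H Y : Submodule K V} {h : ℕ} {t s : ℕ → V} (hc : IsChainPair C H Y N h t s)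
    (hn : finrank K V = h + 2) {ρ : K} (hρ : ρ ≠ 0) (μ : K) :
    ∃ e e' : ℕ → V, span K (e '' Set.Iio (h + 2)) = ⊤ ∧ span K (e' '' Set.Iio (h + 2)) = ⊤ ∧
      (∀ i ≤ h, e i = t i) ∧ (∀ i ≤ h, e' i = s i) ∧
      e' (h + 1) = ρ • (e (h + 1) + μ • t 0) + s h := by
  obtain ⟨e, het, he, -⟩ :=
    exists_eqOn_span_image_eq_top_of_sup (m := 1) hc.span_left (sup_top_eq Y)
      (by rw [hc.finrank_right, hn])
  replace het (i : ℕ) (hi : i ≤ h) : e i = t i := het i (by omega)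
  let e' := Function.update s (h + 1) (ρ • (e (h + 1) + μ • t 0) + s h)
  have hes (i : ℕ) (hi : i ≤ h) : e' i = s i := Function.update_of_ne (by omega) _ _
  have hew : e' (h + 1) = ρ • (e (h + 1) + μ • t 0) + s h := Function.update_self _ _ _
  refine ⟨e, e', he, hc.span_image_eq_top (by omega) he het hes fun i hi hin ↦ ?_, het, hes, hew⟩
  obtain rfl : i = h + 1 := by omega
  have hs : s h ∈ Y := hc.span_right ▸ subset_span ⟨h, h.lt_succ_self, rfl⟩
  have ht : t 0 ∈ Y := hc.span_left ▸ subset_span ⟨0, h.succ_pos, rfl⟩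
  refine mem_sup.2 ⟨-(ρ⁻¹ • s h + μ • t 0),
    Y.neg_mem (Y.add_mem (Y.smul_mem _ hs) (Y.smul_mem _ ht)),
    ρ⁻¹ • e' (h + 1), smul_mem _ _ (mem_span_singleton_self _), ?_⟩
  rw [hew, smul_add, inv_smul_smul₀ hρ]
  module

theorem smodEq_of_twisted_hook {H : Submodule K V} {A : End K V} {t₀ t s₀ s w : V}
    {ρ κ μ c : K} (hρ : ρ ≠ 0) (hs : s ∈ H) (ht₀ : A t₀ ∈ H) (hs₀ : s₀ ≡ κ • t₀ [SMOD H])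
    (hAρ : A s ≡ ρ • A t [SMOD H]) (hAs : A s ≡ ρ • (w + μ • t₀) + s [SMOD H])
    (hAw : A (ρ • (w + μ • t₀) + s) ≡ c • s₀ [SMOD H]) :
    A t ≡ w + μ • t₀ [SMOD H] ∧ A w ≡ (ρ⁻¹ * c * κ - μ) • t₀ - w [SMOD H] := by
  have hAs' : A s ≡ ρ • (w + μ • t₀) [SMOD H] :=
    hAs.trans (SModEq.sub_mem.2 (by rwa [add_sub_cancel_left]))
  constructor
  · simpa only [inv_smul_smul₀ hρ] using (hAρ.symm.trans hAs').smul ρ⁻¹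
  have hsum :=
    calc ρ • A w = A (ρ • (w + μ • t₀) + s) - A s - (ρ * μ) • A t₀ := by
          simp only [map_add, map_smul]
          module
      _ ≡ c • κ • t₀ - ρ • (w + μ • t₀) - (ρ * μ) • 0 [SMOD H] :=
          ((hAw.trans (hs₀.smul c)).sub hAs').sub ((SModEq.zero.2 ht₀).smul _)
      _ = ρ • ((ρ⁻¹ * c * κ - μ) • t₀ - w) := by
          match_scalars <;> field_simp
  simpa only [inv_smul_smul₀ hρ] using hsum.smul ρ⁻¹

theorem IsChainPair.hasCoupledPair_of_isAlt [FiniteDimensional K V]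
    {b : LinearMap.BilinForm K V} {C N : End K V} {H Y : Submodule K V} {h : ℕ} {t s : ℕ → V}
    (hc : IsChainPair C H Y N h t s) (hd : IsCouplingDatum b H N) (hb : b.IsAlt)
    (hh : 1 ≤ h) (hn : finrank K V = h + 2) {p q : K[X]} (hp : p.Monic)
    (hpn : p.natDegree = h + 2) (hp0 : p.coeff 0 ≠ 0) (hq : q.Monic)
    (hqn : q.natDegree = h + 2) : HasCoupledPair b H N p q := by
  obtain ⟨ρ, hρ, hAρ⟩ := hc.exists_smodEq_apply_right_last
  obtain ⟨κ, hκ⟩ := hc.exists_smodEq_right_zero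
  set μ : K := ρ⁻¹ * -q.coeff 0 * κ - p.coeff 0 with hμ
  obtain ⟨e, e', he, he', het, hes, hew⟩ := hc.exists_twisted_extension hn hρ μ
  obtain ⟨D, A, hD, hA, hDA, hAC, hDlow, hDcyc, hAcyc⟩ :=
    hc.exists_hooks hd.mapsTo hh hn (by omega) he het he' hes hp hpn hp0 hq hqn
  have hDt : D (t h) ≡ e (h + 1) [SMOD H] := het h le_rfl ▸ hDcyc.succ h (by omega)
  have hDw : D (e (h + 1)) ≡ -p.coeff 0 • t 0 [SMOD H] := het 0 h.zero_le ▸ hDcyc.last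
  have hsH : s h ∈ H := by
    simpa [Nat.sub_add_cancel hh] using hc.succ_mem_right hd.mapsTo (Nat.sub_one_lt_of_lt hh)
  have ht₀ : A (t 0) ∈ H := by
    have hDt₀ := hDlow 0 hh
    rw [het 0 h.zero_le] at hDt₀
    exact hDA _ hDt₀ ▸ hd.mapsTo _ hDt₀
  obtain ⟨hAt, hAw⟩ := smodEq_of_twisted_hook hρ hsH ht₀ hκ (hAρ A hAC)
    (hew ▸ hes h le_rfl ▸ hAcyc.succ h (by omega)) (hew ▸ hes 0 h.zero_le ▸ hAcyc.last)
  rw [hμ, sub_sub_cancel] at hAw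
  refine ⟨D, A, hD, hA, hd.isCoupled_of_span he hDA hDlow fun i j hi hij hj ↦ ?_⟩
  obtain ⟨rfl, rfl⟩ : i = h ∧ j = h + 1 := by omega
  rw [het i le_rfl, hd.apply_congr hAt hDw, hd.apply_congr hAw hDt]
  simp only [map_add, map_sub, map_smul, LinearMap.add_apply, LinearMap.sub_apply, neg_smul,
    LinearMap.smul_apply, hb.self_eq_zero, ← hb.neg_eq (t 0) (e (i + 1)), map_neg, smul_zero,
    add_zero, sub_zero, smul_neg, neg_neg]

theorem IsCouplingDatum.hasCoupledPair_of_isSymm [FiniteDimensional K V]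
    {b : LinearMap.BilinForm K V} {H : Submodule K V} {N : End K V} (hd : IsCouplingDatum b H N)
    (hH : H ≠ ⊥) (hb : ∀ x y, b x y = b y x) {v : V} (hv : b v v ≠ 0) {n : ℕ}
    (hn : finrank K V = n) {p q : K[X]} (hp : p.Monic) (hpn : p.natDegree = n)
    (hp0 : p.coeff 0 ≠ 0) (hq : q.Monic) (hqn : q.natDegree = n) : HasCoupledPair b H N p q := by
  set h := finrank K H
  have hh : 1 ≤ h := one_le_finrank_iff.2 hH
  have hvH : v ∉ H := fun hvH ↦ hv (hd.left_eq_zero v hvH v)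
  have hY : finrank K ↥(H ⊔ K ∙ v) = h + 1 := finrank_sup_span_singleton hvH
  have hhn : h < n := by
    have := finrank_le (H ⊔ K ∙ v)
    omega
  obtain ⟨C, t, s, hc⟩ := hd.exists_isChainPair le_sup_left hY
  have ht0 : b (t 0) (t 0) ≠ 0 := fun h0 ↦ by
    obtain ⟨c, hvc⟩ := hc.exists_smodEq_smul_left_zero (mem_sup_right (mem_span_singleton_self v))
    exact hv (by rw [hd.apply_congr hvc hvc, map_smul, map_smul, LinearMap.smul_apply, h0,
      smul_zero, smul_zero])
  have htop : H ⊔ K ∙ v ⊔ LinearMap.ker (b (t 0)) = ⊤ := by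
    rw [← hc.sup_span_left_zero, sup_assoc, LinearMap.span_singleton_sup_ker_eq_top _ ht0,
      sup_top_eq]
  obtain ⟨e, het, he, heZ⟩ :=
    exists_eqOn_span_image_eq_top_of_sup (m := n - (h + 1)) hc.span_left htop (by omega)
  rw [Nat.add_sub_cancel' hhn] at he heZ
  refine hc.hasCoupledPair_of_orthogonal hd hb hh hn hhn he (fun i hi ↦ het i (by omega))
    (fun i hi hin ↦ ?_) hp hpn hp0 hq hqn
  rw [het 0 (by omega)]
  exact heZ i hi hin

theorem IsCouplingDatum.hasCoupledPair_of_isAlt [FiniteDimensional K V]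
    {b : LinearMap.BilinForm K V} {H : Submodule K V} {N : End K V} (hd : IsCouplingDatum b H N)
    (hH : H ≠ ⊥) (hb : b.IsAlt) (hdim : finrank K V = finrank K H + 2) {p q : K[X]}
    (hp : p.Monic) (hpn : p.natDegree = finrank K H + 2) (hp0 : p.coeff 0 ≠ 0) (hq : q.Monic)
    (hqn : q.natDegree = finrank K H + 2) : HasCoupledPair b H N p q := by
  obtain ⟨v, -, hvH⟩ := exists_mem_notMem_of_finrank_lt (X' := H) (X := ⊤)
    (by rw [finrank_top]; omega)
  have hY : finrank K ↥(H ⊔ K ∙ v) = finrank K H + 1 := finrank_sup_span_singleton hvH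
  obtain ⟨C, t, s, hc⟩ := hd.exists_isChainPair le_sup_left hY
  exact hc.hasCoupledPair_of_isAlt hd hb (one_le_finrank_iff.2 hH) hdim hp hpn hp0 hq hqn

end CoupledPairs

section TrivialIntersection

open Module Submodule

variable {K V : Type*} [Field K] [AddCommGroup V] [Module K V]

theorem exists_notMem_apply_eq {φ : V →ₗ[K] K} (hφ : φ ≠ 0) {W : Submodule K V} (hW : W ≠ ⊤)
    {c : K} (h : LinearMap.ker φ ≤ W → c ≠ 0) : ∃ z ∉ W, φ z = c := by
  obtain ⟨z, rfl⟩ := LinearMap.surjective hφ c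
  by_cases hz : z ∈ W
  · obtain ⟨k, hk, hkW⟩ : ∃ k ∈ LinearMap.ker φ, k ∉ W := by
      by_contra! hker
      refine hW (top_le_iff.1 ?_)
      rw [← LinearMap.span_singleton_sup_ker_eq_top φ (h hker)]
      exact sup_le ((span_singleton_le_iff_mem z W).2 hz) hker
    refine ⟨z + k, fun hzk ↦ hkW ((W.add_mem_iff_right hz).1 hzk), ?_⟩
    rw [map_add, LinearMap.mem_ker.1 hk, add_zero]
  · exact ⟨z, hz, rfl⟩

theorem exists_span_image_eq_top_apply_eq [FiniteDimensional K V] {φ : V →ₗ[K] K} (hφ : φ ≠ 0)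
    {w : V} (hw : w ≠ 0) {n : ℕ} (hn : finrank K V = n) {β : ℕ → K} (h0 : φ w = β 0)
    (hβ : ∃ i < n, β i ≠ 0) :
    ∃ e : ℕ → V, e 0 = w ∧ span K (e '' Set.Iio n) = ⊤ ∧ ∀ i < n, φ (e i) = β i := by
  obtain ⟨k, hk, hβk⟩ := hβ
  have hker := Dual.finrank_ker_add_one_of_ne_zero hφ
  have hspan : span K ((fun _ ↦ w) '' Set.Iio 1) = K ∙ w := by
    rw [Set.Nonempty.image_const ⟨0, Set.mem_Iio.2 zero_lt_one⟩]
  obtain ⟨e, he0, he, heβ⟩ := exists_eqOn_span_image_eq_top (k := 1) (m := n - 1)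
    (P := fun i z ↦ φ z = β i) (e := fun _ ↦ w) (by rw [hspan, finrank_span_singleton hw]; omega)
    (fun i hi ↦ by rw [Nat.lt_one_iff.1 hi, h0]) fun f j _ hj _ hf hW ↦ by
      refine exists_notMem_apply_eq hφ hW fun hle hβj ↦ ?_
      have hj' : n - 1 ≤ j := calc
        n - 1 = finrank K (LinearMap.ker φ) := by omega
        _ ≤ finrank K (span K (f '' Set.Iio j)) := finrank_mono hle
        _ ≤ j := by
          rw [Set.image_eq_range]
          exact (finrank_range_le_card _).trans_eq (by simp)
      have hlt := finrank_lt hW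
      have heq := eq_of_le_of_finrank_le hle (by omega)
      obtain hkj | rfl : k < j ∨ k = j := by omega
      · refine hβk ?_
        rw [← hf k hkj, ← LinearMap.mem_ker, heq]
        exact subset_span ⟨k, hkj, rfl⟩
      · exact hβk hβj
  rw [Nat.add_sub_cancel' (by omega)] at he heβ
  exact ⟨e, he0 0 zero_lt_one, he, heβ⟩

theorem minpoly_smul_eq_scaleRoots {A : Type*} [Ring A] [Algebra K A] {c : K} (hc : c ≠ 0) {x : A}
    (hx : IsIntegral K x) : minpoly K (c • x) = (minpoly K x).scaleRoots c := by
  refine (minpoly.unique K _ ((monic_scaleRoots_iff c).2 (minpoly.monic hx)) ?_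
    fun q hq hqx ↦ ?_).symm
  · rw [Algebra.smul_def]
    exact scaleRoots_aeval_eq_zero (minpoly.aeval K x)
  · rw [degree_scaleRoots, ← degree_scaleRoots q (s := c⁻¹)]
    refine minpoly.min K x ((monic_scaleRoots_iff _).2 hq) ?_
    simpa only [← Algebra.smul_def, inv_smul_smul₀ hc] using
      scaleRoots_aeval_eq_zero (r := c⁻¹) hqx

theorem HasCoupledPair.of_scaleRoots_left [FiniteDimensional K V] {b : LinearMap.BilinForm K V}
    {N : End K V} {p q : K[X]} {c : K} (hc : c ≠ 0)
    (h : HasCoupledPair b ⊥ N (p.scaleRoots c) q) : HasCoupledPair b ⊥ N p q := by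
  obtain ⟨D, A, hD, hA, hDA⟩ := h
  refine ⟨c⁻¹ • D, A, ?_, hA, fun u w ↦ ?_, fun u hu ↦ ?_⟩
  · rw [minpoly_smul_eq_scaleRoots (inv_ne_zero hc) (Algebra.IsIntegral.isIntegral D), hD,
      ← scaleRoots_mul, mul_inv_cancel₀ hc, scaleRoots_one]
  · simp only [LinearMap.smul_apply, map_smul, hDA.symm u w]
  · have hDu : D u = 0 := by simpa [hc] using hu
    rw [hDA.apply_eq u hDu, LinearMap.smul_apply, hDu, smul_zero]

theorem eval_repr_sum_C_mul_X_mul_X {ι : Type*} [Fintype ι] (e : Basis ι K V)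
    (b : LinearMap.BilinForm K V) (x : V) :
    MvPolynomial.eval (e.repr x) (∑ i, ∑ j,
      MvPolynomial.C (b (e i) (e j)) * (MvPolynomial.X i * MvPolynomial.X j)) = b x x := by
  conv_rhs => rw [← e.sum_repr x]
  simp only [map_sum, map_mul, MvPolynomial.eval_C, MvPolynomial.eval_X, LinearMap.sum_apply,
    map_smul, LinearMap.smul_apply, smul_eq_mul]
  rw [Finset.sum_comm]
  refine Finset.sum_congr rfl fun i _ ↦ ?_
  rw [Finset.mul_sum]
  refine Finset.sum_congr rfl fun j _ ↦ ?_
  ring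

theorem exists_isotropic_of_finite [Finite K] [FiniteDimensional K V] (hn : 2 < finrank K V)
    (b : LinearMap.BilinForm K V) : ∃ w ≠ 0, b w w = 0 := by
  classical
  cases nonempty_fintype K
  let e := finBasis K V
  let f : MvPolynomial (Fin (finrank K V)) K := ∑ i, ∑ j,
    MvPolynomial.C (b (e i) (e j)) * (MvPolynomial.X i * MvPolynomial.X j)
  have hdeg : f.totalDegree < Fintype.card (Fin (finrank K V)) := by
    rw [Fintype.card_fin]
    refine (MvPolynomial.totalDegree_finsetSum_le fun i _ ↦
      MvPolynomial.totalDegree_finsetSum_le fun j _ ↦ ?_).trans_lt hn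
    refine (MvPolynomial.totalDegree_mul _ _).trans ?_
    rw [MvPolynomial.totalDegree_C, zero_add]
    refine (MvPolynomial.totalDegree_mul _ _).trans ?_
    rw [MvPolynomial.totalDegree_X, MvPolynomial.totalDegree_X]
  have heval (x : V) : MvPolynomial.eval (e.repr x) f = b x x :=
    eval_repr_sum_C_mul_X_mul_X e b x
  obtain ⟨r, hr⟩ := CharP.exists K
  have hr1 : 1 < r :=
    ((CharP.char_is_prime_or_zero K r).resolve_right (CharP.char_ne_zero_of_finite K r)).one_lt
  have hzero : MvPolynomial.eval (0 : Fin (finrank K V) → K) f = 0 := by simpa using heval 0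
  have hcard : 1 < Fintype.card {x : Fin (finrank K V) → K // MvPolynomial.eval x f = 0} :=
    hr1.trans_le (Nat.le_of_dvd (Fintype.card_pos_iff.2 ⟨⟨0, hzero⟩⟩)
      (char_dvd_card_solutions r hdeg))
  obtain ⟨⟨x, hx⟩, hne⟩ := Fintype.exists_ne_of_one_lt_card hcard ⟨0, hzero⟩
  refine ⟨e.equivFun.symm x, ?_, ?_⟩
  · rw [Ne, LinearEquiv.map_eq_zero_iff]
    exact fun h ↦ hne (Subtype.ext h)
  · rw [← heval, ← Basis.equivFun_apply, LinearEquiv.apply_symm_apply, hx]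

theorem minpoly_eq_of_apply_eq_sub_smul [FiniteDimensional K V] {D : End K V} {n : ℕ}
    (hn : finrank K V = n) {e : ℕ → V} (he : span K (e '' Set.Iio n) = ⊤) (hen : e n = 0)
    {p : K[X]} (hp : p.Monic) (hpn : p.natDegree = n)
    (hD : ∀ i < n, D (e i) = e (i + 1) - p.coeff (n - 1 - i) • e 0) : minpoly K D = p := by
  subst hpn
  refine minpoly_eq_of_hook hp hn.symm (Nat.zero_le _) he (fun i hi ↦ absurd hi i.not_lt_zero)
    (fun j hj ↦ ?_) (by rw [hen, Finset.sum_range_zero, neg_zero])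
  rw [zero_add, zero_add, hD j hj]

-- `A` is a perturbation of `D` by a rank one map `u ↦ γ • b w (D u) • w`.
theorem hasCoupledPair_bot_of_span [FiniteDimensional K V] {b : LinearMap.BilinForm K V}
    (N : End K V) (hb : ∀ x y, b x y = b y x) {n : ℕ} (hn : finrank K V = n) {e : ℕ → V}
    (he : span K (e '' Set.Iio n) = ⊤) (hen : e n = 0) {p q : K[X]} (hp : p.Monic)
    (hpn : p.natDegree = n) (hq : q.Monic) (hqn : q.natDegree = n) {γ : K}
    (hγ : ∀ i < n, γ * (b (e 0) (e (i + 1)) - p.coeff (n - 1 - i) * b (e 0) (e 0)) =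
      p.coeff (n - 1 - i) - q.coeff (n - 1 - i)) : HasCoupledPair b ⊥ N p q := by
  obtain ⟨D, hD⟩ := exists_linearMap_apply_eq_of_span hn he
    fun i ↦ e (i + 1) - p.coeff (n - 1 - i) • e 0
  let A : End K V := D + (γ • b (e 0) ∘ₗ D).smulRight (e 0)
  have hA (u : V) : A u = D u + (γ * b (e 0) (D u)) • e 0 := rfl
  refine ⟨D, A, minpoly_eq_of_apply_eq_sub_smul hn he hen hp hpn hD,
    minpoly_eq_of_apply_eq_sub_smul hn he hen hq hqn fun i hi ↦ ?_, fun u v ↦ ?_, fun u hu ↦ ?_⟩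
  · rw [hA, hD i hi, map_sub, map_smul, smul_eq_mul, hγ i hi]
    module
  · simp only [hA, map_add, LinearMap.add_apply, map_smul, LinearMap.smul_apply, smul_eq_mul,
      hb (D u) (D v)]
    ring
  · rw [hA, (mem_bot K).1 hu, map_zero, mul_zero, zero_smul, add_zero, map_zero]

theorem hasCoupledPair_bot_of_coeff [FiniteDimensional K V] {b : LinearMap.BilinForm K V}
    (N : End K V) (hb : ∀ x y, b x y = b y x) {w : V} (hw : b w ≠ 0) {n : ℕ}
    (hn : finrank K V = n) {p q : K[X]} (hp : p.Monic) (hpn : p.natDegree = n)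
    (hq : q.Monic) (hqn : q.natDegree = n) {γ : K} (hγ : γ ≠ 0)
    (hend : p.coeff 0 - q.coeff 0 + γ * (p.coeff 0 * b w w) = 0)
    (hne : ∃ i < n, p.coeff (n - i) - q.coeff (n - i) + γ * (p.coeff (n - i) * b w w) ≠ 0) :
    HasCoupledPair b ⊥ N p q := by
  let β (i : ℕ) : K := γ⁻¹ * (p.coeff (n - i) - q.coeff (n - i)) + p.coeff (n - i) * b w w
  have hγβ (i : ℕ) :
      γ * β i = p.coeff (n - i) - q.coeff (n - i) + γ * (p.coeff (n - i) * b w w) := by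
    simp only [β, mul_add, mul_inv_cancel_left₀ hγ]
  have hβ0 : b w w = β 0 := by
    have hpc : p.coeff n = 1 := hpn ▸ hp.coeff_natDegree
    have hqc : q.coeff n = 1 := hqn ▸ hq.coeff_natDegree
    simp only [β, Nat.sub_zero, hpc, hqc, sub_self, mul_zero, zero_add, one_mul]
  have hβn : β n = 0 := by
    refine (mul_eq_zero_iff_left hγ).1 ?_
    rw [hγβ, Nat.sub_self, hend]
  obtain ⟨e, he0, he, hβ⟩ := exists_span_image_eq_top_apply_eq hw
    (by rintro rfl; exact hw (map_zero b)) hn hβ0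
    (hne.imp fun i ⟨hi, hne⟩ ↦ ⟨hi, fun h ↦ hne (by rw [← hγβ, h, mul_zero])⟩)
  obtain ⟨e', he', hen⟩ : ∃ e' : ℕ → V, (∀ i < n, e' i = e i) ∧ e' n = 0 :=
    ⟨Function.update e n 0, fun i hi ↦ Function.update_of_ne hi.ne _ _, Function.update_self ..⟩
  have hβ' (i : ℕ) (hi : i ≤ n) : b w (e' i) = β i := by
    obtain hi | rfl := hi.lt_or_eq
    · rw [he' i hi, hβ i hi]
    · rw [hen, map_zero, hβn]
  refine hasCoupledPair_bot_of_span N hb hn (e := e') ?_ hen hp hpn hq hqn (γ := γ) fun i hi ↦ ?_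
  · rwa [Set.image_congr (s := Set.Iio n) he']
  · rw [he' 0 (by omega), he0, hβ' _ hi, mul_sub, hγβ, show n - (i + 1) = n - 1 - i by omega,
      add_sub_cancel_right]

theorem finite_of_forall_pow_eq_one {n : ℕ} (hn : n ≠ 0) (h : ∀ c : K, c ≠ 0 → c ^ n = 1) :
    Finite K := by
  have hne : (X ^ (n + 1) - X : K[X]) ≠ 0 := FiniteField.X_pow_card_sub_X_ne_zero K (by omega)
  refine Set.finite_univ_iff.1 ((rootSet_finite (X ^ (n + 1) - X : K[X]) K).subset fun c _ ↦ ?_)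
  rw [mem_rootSet]
  refine ⟨hne, ?_⟩
  rcases eq_or_ne c 0 with rfl | hc
  · simp
  · simp [pow_succ, h c hc]

theorem exists_coeff_sub_ne {p q : K[X]} {n : ℕ} (hp : p.natDegree ≤ n) (hq : q.natDegree ≤ n)
    (h0 : p.coeff 0 = q.coeff 0) (hpq : p ≠ q) : ∃ i < n, p.coeff (n - i) ≠ q.coeff (n - i) := by
  by_contra! h
  refine hpq (ext_iff_natDegree_le hp hq |>.2 fun k hk ↦ ?_)
  rcases k.eq_zero_or_pos with rfl | hk0
  · exact h0
  · simpa only [Nat.sub_sub_self hk] using h (n - k) (by omega)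

theorem hasCoupledPair_bot_of_coeff_zero_ne [FiniteDimensional K V]
    {b : LinearMap.BilinForm K V} (N : End K V) (hb : ∀ x y, b x y = b y x) {v : V}
    (hv : b v v ≠ 0) {n : ℕ} (hn0 : 0 < n) (hn : finrank K V = n) {p q : K[X]} (hp : p.Monic)
    (hpn : p.natDegree = n) (hp0 : p.coeff 0 ≠ 0) (hq : q.Monic) (hqn : q.natDegree = n)
    (hpq : p.coeff 0 ≠ q.coeff 0) : HasCoupledPair b ⊥ N p q := by
  have hpc : p.coeff n = 1 := hpn ▸ hp.coeff_natDegree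
  have hqc : q.coeff n = 1 := hqn ▸ hq.coeff_natDegree
  have hpv : p.coeff 0 * b v v ≠ 0 := mul_ne_zero hp0 hv
  let γ := (q.coeff 0 - p.coeff 0) / (p.coeff 0 * b v v)
  have hγ : γ ≠ 0 := div_ne_zero (sub_ne_zero.2 hpq.symm) hpv
  refine hasCoupledPair_bot_of_coeff N hb (fun h ↦ hv congr($h v)) hn hp hpn hq hqn hγ ?_
    ⟨0, hn0, ?_⟩
  · rw [div_mul_cancel₀ _ hpv, sub_add_sub_cancel, sub_self]
  · rw [Nat.sub_zero, hpc, hqc, sub_self, zero_add, one_mul]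
    exact mul_ne_zero hγ hv

theorem hasCoupledPair_bot [FiniteDimensional K V] {b : LinearMap.BilinForm K V} (N : End K V)
    (hb : ∀ x y, b x y = b y x) (hbn : b.Nondegenerate) {v : V} (hv : b v v ≠ 0) {n : ℕ}
    (hn3 : 2 < n) (hn : finrank K V = n) {p q : K[X]} (hp : p.Monic) (hpn : p.natDegree = n)
    (hp0 : p.coeff 0 ≠ 0) (hq : q.Monic) (hqn : q.natDegree = n) (hpq : p ≠ q) :
    HasCoupledPair b ⊥ N p q := by
  have hn0 : 0 < n := by omega
  by_cases hc : ∃ c : K, c ≠ 0 ∧ p.coeff 0 * c ^ n ≠ q.coeff 0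
  · obtain ⟨c, hc0, hc⟩ := hc
    have hcoeff : (p.scaleRoots c).coeff 0 = p.coeff 0 * c ^ n := by
      rw [coeff_scaleRoots, hpn, Nat.sub_zero]
    exact (hasCoupledPair_bot_of_coeff_zero_ne N hb hv hn0 hn ((monic_scaleRoots_iff c).2 hp)
      ((natDegree_scaleRoots p c).trans hpn) (hcoeff ▸ mul_ne_zero hp0 (pow_ne_zero n hc0)) hq hqn
      (hcoeff ▸ hc)).of_scaleRoots_left hc0
  · push Not at hc
    have h0 : p.coeff 0 = q.coeff 0 := by simpa using hc 1 one_ne_zero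
    have : Finite K := finite_of_forall_pow_eq_one hn0.ne' fun c hc0 ↦
      mul_left_cancel₀ hp0 (by rw [hc c hc0, h0, mul_one])
    obtain ⟨w, hw, hww⟩ := exists_isotropic_of_finite (hn ▸ hn3) b
    refine hasCoupledPair_bot_of_coeff N hb (fun h ↦ hw (hbn.1 w fun y ↦ congr($h y))) hn hp hpn hq
      hqn one_ne_zero (by rw [h0, hww, sub_self, mul_zero, mul_zero, add_zero]) ?_
    simpa only [hww, mul_zero, add_zero, sub_ne_zero] using
      exists_coeff_sub_ne hpn.le hqn.le h0 hpq

end TrivialIntersection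

section SymplecticForms

open Module Submodule

variable {K V : Type*} [Field K] [AddCommGroup V] [Module K V] {B : LinearMap.BilinForm K V}

/-- A symplectic form: a nondegenerate alternating bilinear form. -/
structure IsSymplecticForm (B : LinearMap.BilinForm K V) : Prop where
  isAlt : B.IsAlt
  nondegenerate : B.Nondegenerate

/-- A Lagrangian subspace: one that equals its orthogonal complement. Isotropy of `W` is expressed
by `W ≤ B.orthogonal W`. -/
def IsLagrangian (B : LinearMap.BilinForm K V) (L : Submodule K V) : Prop :=
  B.orthogonal L = L

theorem IsLagrangian.le_orthogonal {L : Submodule K V} (hL : IsLagrangian B L) :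
    L ≤ B.orthogonal L :=
  hL.ge

theorem IsLagrangian.apply_eq_zero {L : Submodule K V} (hL : IsLagrangian B L) {x y : V}
    (hx : x ∈ L) (hy : y ∈ L) : B x y = 0 :=
  hL.le_orthogonal hy x hx

theorem IsLagrangian.mem {L : Submodule K V} (hL : IsLagrangian B L) {x : V}
    (hx : ∀ y ∈ L, B y x = 0) : x ∈ L :=
  hL.le hx

theorem IsSymplecticForm.eq_zero_of_forall {x : V} (hB : IsSymplecticForm B)
    (hx : ∀ y, B x y = 0) : x = 0 :=
  hB.nondegenerate.1 x hx

theorem sup_le_orthogonal_sup (hB : B.IsRefl) {W U : Submodule K V} (hW : W ≤ B.orthogonal W)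
    (hU : U ≤ B.orthogonal U) (hUW : U ≤ B.orthogonal W) : W ⊔ U ≤ B.orthogonal (W ⊔ U) := by
  have hWU : W ≤ B.orthogonal U :=
    (LinearMap.BilinForm.le_orthogonal_orthogonal hB).trans (LinearMap.BilinForm.orthogonal_le hUW)
  intro x hx y hy
  obtain ⟨y₁, hy₁, y₂, hy₂, rfl⟩ := mem_sup.1 hy
  change B (y₁ + y₂) x = 0
  rw [map_add, LinearMap.add_apply, show B y₁ x = 0 from sup_le hW hUW hx y₁ hy₁,
    show B y₂ x = 0 from sup_le hWU hU hx y₂ hy₂, add_zero]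

theorem span_singleton_le_orthogonal (hB : B.IsAlt) (v : V) : K ∙ v ≤ B.orthogonal (K ∙ v) := by
  rw [span_singleton_le_iff_mem]
  intro y hy
  obtain ⟨c, rfl⟩ := mem_span_singleton.1 hy
  simp [hB.self_eq_zero]

theorem IsSymplecticForm.injective_of_isOrthogonal (hB : IsSymplecticForm B) {S : End K V}
    (hS : B.IsOrthogonal S) : Function.Injective S := by
  refine (injective_iff_map_eq_zero S).2 fun x hx ↦ hB.eq_zero_of_forall fun y ↦ ?_
  rw [← hS, hx, map_zero, LinearMap.zero_apply]

section FiniteDimensional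

variable [FiniteDimensional K V]

theorem IsSymplecticForm.finrank_add_finrank_orthogonal (hB : IsSymplecticForm B)
    (W : Submodule K V) : finrank K W + finrank K (B.orthogonal W) = finrank K V := by
  rw [LinearMap.BilinForm.finrank_orthogonal hB.nondegenerate,
    Nat.add_sub_cancel' (finrank_le W)]

theorem IsLagrangian.finrank_add_self (hB : IsSymplecticForm B) {L : Submodule K V}
    (hL : IsLagrangian B L) : finrank K L + finrank K L = finrank K V := by
  have h := hB.finrank_add_finrank_orthogonal L
  rwa [show B.orthogonal L = L from hL] at h

theorem isLagrangian_of_finrank_le (hB : IsSymplecticForm B) {L : Submodule K V}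
    (hL : L ≤ B.orthogonal L) (hdim : finrank K V ≤ finrank K L + finrank K L) :
    IsLagrangian B L := by
  have := hB.finrank_add_finrank_orthogonal L
  exact (eq_of_le_of_finrank_le hL (by lia)).symm

theorem IsLagrangian.isCompl (hB : IsSymplecticForm B) {L L' : Submodule K V}
    (hL : IsLagrangian B L) (hL' : IsLagrangian B L') (h : Disjoint L L') : IsCompl L L' := by
  refine ⟨h, codisjoint_iff.2 (eq_top_of_finrank_eq ?_)⟩
  have hdim := finrank_sup_add_finrank_inf_eq L L'
  rw [h.eq_bot, finrank_bot] at hdim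
  have := hL.finrank_add_self hB
  have := hL'.finrank_add_self hB
  lia

theorem isLagrangian_of_isCompl (hB : IsSymplecticForm B) {L L' : Submodule K V}
    (hL : L ≤ B.orthogonal L) (hL' : L' ≤ B.orthogonal L') (h : IsCompl L L') :
    IsLagrangian B L := by
  refine isLagrangian_of_finrank_le hB hL ?_
  have := finrank_add_eq_of_isCompl h
  have := hB.finrank_add_finrank_orthogonal L'
  have := finrank_mono hL'
  have := hB.finrank_add_finrank_orthogonal L
  have := finrank_mono hL
  lia

end FiniteDimensional

theorem isAdjointPair_aeval {T T' : End K V} (hT : LinearMap.IsAdjointPair B B T T') (f : K[X]) :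
    LinearMap.IsAdjointPair B B (aeval T f) (aeval T' f) := by
  induction f using Polynomial.induction_on with
  | C a => intro x y; simp
  | add p q hp hq => intro x y; simp [hp x y, hq x y]
  | monomial n a h =>
    intro x y
    have hcomm := aeval_apply_comm T' X (C a * X ^ n) y
    rw [aeval_X] at hcomm
    have hsucc (S : End K V) (z : V) :
        aeval S (C a * X ^ (n + 1)) z = aeval S (C a * X ^ n) (S z) := by simp [pow_succ]
    rw [hsucc, hsucc, h, hT, hcomm]

theorem apply_aeval_self_of_isSelfAdjoint (hB : B.IsAlt) {T : End K V} (hT : B.IsSelfAdjoint T)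
    (hT0 : ∀ x, B x (T x) = 0) (v : V) (f : K[X]) : B v (aeval T f v) = 0 := by
  have hpow (k : ℕ) (x y : V) : B ((T ^ k) x) y = B x ((T ^ k) y) := by
    simpa using isAdjointPair_aeval hT (X ^ k : K[X]) x y
  induction f using Polynomial.induction_on' with
  | add p q hp hq => simp [hp, hq]
  | monomial n a =>
    suffices B v ((T ^ n) v) = 0 by simp [aeval_monomial, this]
    obtain ⟨k, rfl | rfl⟩ := n.even_or_odd'
    · rw [two_mul, pow_add, End.mul_apply, ← hpow, hB.self_eq_zero]
    · rw [two_mul, add_assoc, pow_add, End.mul_apply, ← hpow, pow_succ', End.mul_apply, hT0]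

theorem cyclicSpan_le_orthogonal (hB : B.IsAlt) {T : End K V} (hT : B.IsSelfAdjoint T)
    (hT0 : ∀ x, B x (T x) = 0) (v : V) :
    cyclicSpan T v ≤ B.orthogonal (cyclicSpan T v) := by
  rintro _ ⟨f, rfl⟩ _ ⟨g, rfl⟩
  change B (aeval T g v) (aeval T f v) = 0
  rw [isAdjointPair_aeval hT, ← End.mul_apply, ← map_mul]
  exact apply_aeval_self_of_isSelfAdjoint hB hT hT0 v _

theorem cyclicSpan_le_orthogonal_of_mem {T : End K V} (hT : B.IsSelfAdjoint T)
    {W : Submodule K V} (hW : W ≤ W.comap T) {v : V} (hv : v ∈ B.orthogonal W) :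
    cyclicSpan T v ≤ B.orthogonal W := by
  rintro _ ⟨f, rfl⟩ w hw
  change B w (aeval T f v) = 0
  rw [← isAdjointPair_aeval hT]
  exact hv _ (aeval_apply_smul_mem_of_le_comap hw f T hW)

theorem exists_isLagrangian_le_comap [FiniteDimensional K V] (hB : B.IsAlt) {T : End K V}
    (hT : B.IsSelfAdjoint T) (hT0 : ∀ x, B x (T x) = 0) (x : V) :
    ∃ L, IsLagrangian B L ∧ L ≤ L.comap T ∧ x ∈ L := by
  obtain ⟨L, ⟨hiso, hinv, hxL⟩, hmax⟩ := (wellFounded_gt (α := Submodule K V)).has_min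
    {W | W ≤ B.orthogonal W ∧ W ≤ W.comap T ∧ x ∈ W}
    ⟨cyclicSpan T x, cyclicSpan_le_orthogonal hB hT hT0 x, cyclicSpan_le_comap T x,
      mem_cyclicSpan_self T x⟩
  refine ⟨L, hiso.antisymm' fun v hv ↦ by_contra fun hvL ↦ ?_, hinv, hxL⟩
  refine hmax (L ⊔ cyclicSpan T v) ⟨?_, ?_, mem_sup_left hxL⟩ ?_
  · exact sup_le_orthogonal_sup hB.isRefl hiso (cyclicSpan_le_orthogonal hB hT hT0 v)
      (cyclicSpan_le_orthogonal_of_mem hT hinv hv)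
  · exact sup_le (hinv.trans (comap_mono le_sup_left))
      ((cyclicSpan_le_comap T v).trans (comap_mono le_sup_right))
  · exact left_lt_sup.2 fun h ↦ hvL (h (mem_cyclicSpan_self T v))

section FiniteDimensional

variable [FiniteDimensional K V]

theorem exists_mem_orthogonal_notMem_sup (hB : IsSymplecticForm B) {L W : Submodule K V}
    (hL : IsLagrangian B L) (hW : W ≤ B.orthogonal W) (hWL : Disjoint W L)
    (hW' : ¬ IsLagrangian B W) : ∃ v ∈ B.orthogonal W, v ∉ W ⊔ L := by
  refine Set.not_subset.1 fun hle ↦ hW' (isLagrangian_of_finrank_le hB hW ?_)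
  have hsub : B.orthogonal W ⊓ L ≤ W := by
    calc B.orthogonal W ⊓ L ≤ B.orthogonal (W ⊔ L) := by
          rintro x ⟨hxW, hxL⟩ y hy
          obtain ⟨w, hw, z, hz, rfl⟩ := mem_sup.1 hy
          change B (w + z) x = 0
          rw [map_add, LinearMap.add_apply, show B w x = 0 from hxW w hw,
            hL.apply_eq_zero hz hxL, add_zero]
      _ ≤ B.orthogonal (B.orthogonal W) := LinearMap.BilinForm.orthogonal_le hle
      _ = W := LinearMap.BilinForm.orthogonal_orthogonal hB.nondegenerate hB.isAlt.isRefl W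
  have hdisj : B.orthogonal W ⊓ L = ⊥ := eq_bot_iff.2 (hWL hsub inf_le_right)
  have hdim := finrank_sup_add_finrank_inf_eq (B.orthogonal W) L
  rw [hdisj, finrank_bot] at hdim
  have := finrank_le (B.orthogonal W ⊔ L)
  have := hL.finrank_add_self hB
  have := hB.finrank_add_finrank_orthogonal W
  lia

theorem exists_isLagrangian_isCompl (hB : IsSymplecticForm B) {L I : Submodule K V}
    (hL : IsLagrangian B L) (hI : I ≤ B.orthogonal I) (hIL : Disjoint I L) :
    ∃ L', IsLagrangian B L' ∧ I ≤ L' ∧ IsCompl L L' := by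
  obtain ⟨W, ⟨hW, hWL, hIW⟩, hmax⟩ := (wellFounded_gt (α := Submodule K V)).has_min
    {W | W ≤ B.orthogonal W ∧ Disjoint W L ∧ I ≤ W} ⟨I, hI, hIL, le_rfl⟩
  suffices hLag : IsLagrangian B W from ⟨W, hLag, hIW, hL.isCompl hB hLag hWL.symm⟩
  by_contra hLag
  obtain ⟨v, hvW, hv⟩ := exists_mem_orthogonal_notMem_sup hB hL hW hWL hLag
  refine hmax (W ⊔ K ∙ v) ⟨?_, ?_, hIW.trans le_sup_left⟩ ?_
  · exact sup_le_orthogonal_sup hB.isAlt.isRefl hW (span_singleton_le_orthogonal hB.isAlt v)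
      ((span_singleton_le_iff_mem v _).2 hvW)
  · rw [sup_comm]
    exact hWL.disjoint_sup_left_of_disjoint_sup_right
      ((disjoint_span_singleton_of_notMem hv).symm)
  · exact left_lt_sup.2 fun h ↦ hv (mem_sup_left (h (mem_span_singleton_self v)))

theorem exists_dualEquiv_of_isCompl (hB : IsSymplecticForm B) {L L' : Submodule K V}
    (hL : IsLagrangian B L) (h : IsCompl L L') :
    ∃ F : L' ≃ₗ[K] Dual K L, ∀ (y : L') (x : L), F y x = B x y := by
  let F : L' →ₗ[K] Dual K L := (B.compl₁₂ L.subtype L'.subtype).flip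
  have hF : Function.Injective F := (injective_iff_map_eq_zero F).2 fun y hy ↦ by
    have hyL : (y : V) ∈ L := hL.mem fun x hx ↦ congr($hy ⟨x, hx⟩)
    exact Subtype.ext (disjoint_def.1 h.disjoint y hyL y.2)
  have hdim : finrank K L' = finrank K (Dual K L) := by
    have := finrank_add_eq_of_isCompl h
    have := hL.finrank_add_self hB
    rw [Subspace.dual_finrank_eq]
    lia
  exact ⟨LinearEquiv.ofInjectiveOfFinrankEq F hF hdim, fun _ _ ↦ rfl⟩

end FiniteDimensional

theorem isOrthogonal_of_isCompl (hB : B.IsAlt) {L L' L₂ L₂' : Submodule K V}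
    (hL : IsLagrangian B L) (hL' : IsLagrangian B L') (h : IsCompl L L')
    (hL₂ : IsLagrangian B L₂) (hL₂' : IsLagrangian B L₂') {S : End K V} (hS : L ≤ L₂.comap S)
    (hS' : L' ≤ L₂'.comap S) (hSB : ∀ x ∈ L, ∀ y ∈ L', B (S x) (S y) = B x y) :
    B.IsOrthogonal S := by
  intro x y
  obtain ⟨x₁, hx₁, x₂, hx₂, rfl⟩ := mem_sup.1 (h.sup_eq_top ▸ mem_top : x ∈ L ⊔ L')
  obtain ⟨y₁, hy₁, y₂, hy₂, rfl⟩ := mem_sup.1 (h.sup_eq_top ▸ mem_top : y ∈ L ⊔ L')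
  have h₂₁ : B (S x₂) (S y₁) = B x₂ y₁ := by
    rw [← neg_inj, hB.neg_eq, hB.neg_eq, hSB y₁ hy₁ x₂ hx₂]
  simp only [map_add, LinearMap.add_apply, hL₂.apply_eq_zero (hS hx₁) (hS hy₁),
    hL₂'.apply_eq_zero (hS' hx₂) (hS' hy₂), hL.apply_eq_zero hx₁ hy₁, hL'.apply_eq_zero hx₂ hy₂,
    hSB x₁ hx₁ y₂ hy₂, h₂₁]

theorem exists_isOrthogonal_extending [FiniteDimensional K V] (hB : IsSymplecticForm B)
    {L L' L₂ L₂' : Submodule K V} (hL : IsLagrangian B L) (hL' : IsLagrangian B L')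
    (h : IsCompl L L') (hL₂ : IsLagrangian B L₂) (hL₂' : IsLagrangian B L₂')
    (h₂ : IsCompl L₂ L₂') (g : L ≃ₗ[K] L₂) :
    ∃ S : V ≃ₗ[K] V, B.IsOrthogonal S ∧ (∀ x : L, S x = g x) ∧ ∀ y ∈ L', S y ∈ L₂' := by
  obtain ⟨F, hF⟩ := exists_dualEquiv_of_isCompl hB hL h
  obtain ⟨F₂, hF₂⟩ := exists_dualEquiv_of_isCompl hB hL₂ h₂
  let g' : L' ≃ₗ[K] L₂' := F ≪≫ₗ g.symm.dualMap ≪≫ₗ F₂.symm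
  have hg' (x : L) (y : L') : B (g x) (g' y) = B x y := by
    rw [← hF₂, ← hF]
    simp [g']
  let S : End K V := LinearMap.ofIsCompl h (L₂.subtype ∘ₗ g) (L₂'.subtype ∘ₗ g')
  have hS (x : L) : S x = g x := LinearMap.ofIsCompl_apply_left h x
  have hS' (y : L') : S y = g' y := LinearMap.ofIsCompl_apply_right h y
  have hSL : L ≤ L₂.comap S := fun x hx ↦ by simp [hS ⟨x, hx⟩]
  have hSL' : L' ≤ L₂'.comap S := fun y hy ↦ by simp [hS' ⟨y, hy⟩]
  have hSB : B.IsOrthogonal S :=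
    isOrthogonal_of_isCompl hB.isAlt hL hL' h hL₂ hL₂' hSL hSL' fun x hx y hy ↦ by
      rw [hS ⟨x, hx⟩, hS' ⟨y, hy⟩, hg']
  exact ⟨LinearEquiv.ofInjectiveEndo S (hB.injective_of_isOrthogonal hSB), hSB, hS, hSL'⟩

end SymplecticForms

section ReciprocalPolynomials

variable {K : Type*} [Field K] {p : K[X]}

theorem C_mul_recipPoly (hp : p.coeff 0 ≠ 0) : C (p.coeff 0) * recipPoly p = p.reverse := by
  rw [recipPoly, ← mul_assoc, ← C_mul, mul_inv_cancel₀ hp, C_1, one_mul]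

theorem natDegree_recipPoly (hp : p.coeff 0 ≠ 0) : (recipPoly p).natDegree = p.natDegree := by
  rw [recipPoly, natDegree_C_mul (inv_ne_zero hp), reverse_natDegree,
    natTrailingDegree_eq_zero.2 (.inr hp), tsub_zero]

theorem recipPoly_monic (hp : p.coeff 0 ≠ 0) : (recipPoly p).Monic := by
  rw [Monic, recipPoly, leadingCoeff_mul, leadingCoeff_C, reverse_leadingCoeff,
    trailingCoeff, natTrailingDegree_eq_zero.2 (.inr hp), inv_mul_cancel₀ hp]

theorem coeff_zero_recipPoly_ne_zero (hp : p.coeff 0 ≠ 0) : (recipPoly p).coeff 0 ≠ 0 := by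
  rw [recipPoly, coeff_C_mul, coeff_zero_reverse]
  have : p ≠ 0 := by rintro rfl; exact hp (coeff_zero 0)
  exact mul_ne_zero (inv_ne_zero hp) (leadingCoeff_ne_zero.2 this)

theorem reverse_reverse (hp : p.coeff 0 ≠ 0) : p.reverse.reverse = p := by
  rw [reverse, reverse_natDegree, natTrailingDegree_eq_zero.2 (.inr hp), tsub_zero, reverse,
    reflect_reflect]

theorem recipPoly_recipPoly (hp : p.Monic) (hp0 : p.coeff 0 ≠ 0) :
    recipPoly (recipPoly p) = p := by
  have hcoeff : (recipPoly p).coeff 0 = (p.coeff 0)⁻¹ := by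
    rw [recipPoly, coeff_C_mul, coeff_zero_reverse, hp.leadingCoeff, mul_one]
  rw [recipPoly, hcoeff, recipPoly, reverse_mul_of_domain, reverse_C, reverse_reverse hp0,
    ← mul_assoc, ← C_mul, inv_inv, mul_inv_cancel₀ hp0, C_1, one_mul]

theorem aeval_mul_pow_eq_aeval_reflect {A : Type*} [Ring A] [Algebra K A] {x y : A}
    (h : y * x = 1) {N : ℕ} (f : K[X]) (hf : f.natDegree ≤ N) :
    aeval y f * x ^ N = aeval x (reflect N f) := by
  refine induction_with_natDegree_le (fun f ↦ aeval y f * x ^ N = aeval x (reflect N f)) N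
    (by simp) (fun n a _ hn ↦ ?_) (fun f g _ _ hf hg ↦ ?_) f hf
  · obtain ⟨m, rfl⟩ := Nat.exists_eq_add_of_le hn
    rw [reflect_C_mul_X_pow, revAt_le hn, Nat.add_sub_cancel_left, map_mul, map_mul, aeval_X_pow,
      aeval_X_pow, aeval_C, aeval_C, pow_add, mul_assoc, ← mul_assoc (y ^ n),
      pow_mul_pow_eq_one n h, one_mul]
  · rw [map_add, add_mul, hf, hg, reflect_add, map_add]

/-- A factor `p` such that `p p*` is the minimal polynomial of a strictly hyperbolic symplectic
map; the degree is left free. -/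
structure IsHyperbolicFactor (p : K[X]) : Prop where
  monic : p.Monic
  coeff_zero_ne_zero : p.coeff 0 ≠ 0
  isCoprime : IsCoprime p (recipPoly p)

theorem IsHyperbolicFactor.recipPoly (hp : IsHyperbolicFactor p) :
    IsHyperbolicFactor (recipPoly p) where
  monic := recipPoly_monic hp.coeff_zero_ne_zero
  coeff_zero_ne_zero := coeff_zero_recipPoly_ne_zero hp.coeff_zero_ne_zero
  isCoprime := by
    rw [recipPoly_recipPoly hp.monic hp.coeff_zero_ne_zero]
    exact hp.isCoprime.symm

theorem exists_isHyperbolicFactor_ne (hp : IsHyperbolicFactor p) (hdeg : p.natDegree ≠ 0)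
    (q : K[X]) : ∃ r, IsHyperbolicFactor r ∧ r.natDegree = p.natDegree ∧
      r * recipPoly r = p * recipPoly p ∧ r ≠ q := by
  by_cases hpq : p = q
  · refine ⟨recipPoly p, hp.recipPoly, natDegree_recipPoly hp.coeff_zero_ne_zero, ?_, fun h ↦ ?_⟩
    · rw [recipPoly_recipPoly hp.monic hp.coeff_zero_ne_zero, mul_comm]
    · have hunit := hp.isCoprime
      rw [h, ← hpq, isCoprime_self] at hunit
      exact hdeg (natDegree_eq_zero_of_isUnit hunit)
  · exact ⟨p, hp, rfl, rfl, hpq⟩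

end ReciprocalPolynomials

section SymplecticMaps

open Module Submodule

variable {K V : Type*} [Field K] [AddCommGroup V] [Module K V] {B : LinearMap.BilinForm K V}
  {T : V ≃ₗ[K] V} {p : K[X]}

theorem aeval_eq_zero_iff_of_isAdjointPair (hB : B.Nondegenerate) {A A' : End K V}
    (hA : LinearMap.IsAdjointPair B B A A') (f : K[X]) : aeval A f = 0 ↔ aeval A' f = 0 := by
  have hf := isAdjointPair_aeval hA f
  refine ⟨fun h ↦ LinearMap.ext fun y ↦ hB.2 _ fun x ↦ ?_,
    fun h ↦ LinearMap.ext fun x ↦ hB.1 _ fun y ↦ ?_⟩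
  · rw [← hf, h, LinearMap.zero_apply, map_zero, LinearMap.zero_apply]
  · rw [hf, h, LinearMap.zero_apply, map_zero]

theorem isAdjointPair_symm (hT : B.IsOrthogonal T) :
    LinearMap.IsAdjointPair B B (T : End K V) (T.symm : End K V) :=
  LinearEquiv.isAdjointPair_symm_iff (f := T.toEquiv) |>.2 hT

theorem isOrthogonal_mul {S R : V ≃ₗ[K] V} (hS : B.IsOrthogonal S) (hR : B.IsOrthogonal R) :
    B.IsOrthogonal (S * R : V ≃ₗ[K] V) :=
  fun x y ↦ (hS (R x) (R y)).trans (hR x y)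

theorem isOrthogonal_inv (hT : B.IsOrthogonal T) : B.IsOrthogonal (T⁻¹ : V ≃ₗ[K] V) := fun x y ↦ by
  rw [← hT]
  exact congr_arg₂ (B · ·) (T.apply_symm_apply x) (T.apply_symm_apply y)

theorem apply_aeval_apply_pow (hT : B.IsOrthogonal T) (f : K[X]) (x y : V) :
    B (aeval (T : End K V) f x) (((T : End K V) ^ f.natDegree) y) =
      B x (aeval (T : End K V) f.reverse y) := by
  have hinv : (T.symm : End K V) * (T : End K V) = 1 := T.symm_comp
  rw [isAdjointPair_aeval (isAdjointPair_symm hT), ← End.mul_apply,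
    aeval_mul_pow_eq_aeval_reflect hinv f le_rfl, reverse]

theorem pow_apply_mem {L : Submodule K V} {A : End K V} (h : L ≤ L.comap A) (k : ℕ) {x : V}
    (hx : x ∈ L) : (A ^ k) x ∈ L := by
  simpa using aeval_apply_smul_mem_of_le_comap hx (X ^ k : K[X]) A h

theorem aeval_mul_recipPoly_eq_zero_of_apply_eq_zero (hT : B.IsOrthogonal T)
    {L : Submodule K V} (hL : IsLagrangian B L)
    (h : ∀ x ∈ L, aeval (T : End K V) p x = 0) :
    aeval (T : End K V) (p * recipPoly p) = 0 := by
  ext y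
  rw [map_mul, End.mul_apply, LinearMap.zero_apply]
  refine h _ (hL.mem fun x hx ↦ ?_)
  rw [recipPoly, map_mul, End.mul_apply, aeval_C, algebraMap_end_apply, map_smul,
    ← apply_aeval_apply_pow hT, h x hx, map_zero, LinearMap.zero_apply, smul_zero]

theorem aeval_mul_recipPoly_eq_zero_of_apply_mem (hB : B.Nondegenerate) (hT : B.IsOrthogonal T)
    {L : Submodule K V} (hL : IsLagrangian B L) (hTL : L ≤ L.comap (T : End K V))
    (h : ∀ x, aeval (T : End K V) p x ∈ L) :
    aeval (T : End K V) (p * recipPoly p) = 0 := by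
  ext y
  refine hB.2 _ fun x ↦ ?_
  rw [mul_comm, map_mul, End.mul_apply, recipPoly, map_mul, End.mul_apply, aeval_C,
    algebraMap_end_apply, map_smul, ← apply_aeval_apply_pow hT,
    hL.apply_eq_zero (h x) (pow_apply_mem hTL _ (h y)), smul_zero]

theorem minpoly_dvd_reverse_minpoly (hB : B.Nondegenerate) (hT : B.IsOrthogonal T) :
    minpoly K (T : End K V) ∣ (minpoly K (T : End K V)).reverse := by
  refine minpoly.dvd K _ (LinearMap.ext fun y ↦ hB.2 _ fun x ↦ ?_)
  rw [← apply_aeval_apply_pow hT, minpoly.aeval, LinearMap.zero_apply, map_zero,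
    LinearMap.zero_apply]

theorem apply_mem_ker_aeval (A : End K V) {f : K[X]} {x : V}
    (hx : x ∈ LinearMap.ker (aeval A f)) : A x ∈ LinearMap.ker (aeval A f) := by
  rw [LinearMap.mem_ker] at hx ⊢
  rw [← apply_aeval_of_intertwining (D := A) (fun _ ↦ rfl), hx, map_zero]

theorem map_ker_aeval_of_intertwining {A₁ A₂ : End K V} {g : V ≃ₗ[K] V}
    (hg : ∀ x, g (A₁ x) = A₂ (g x)) (f : K[X]) :
    (LinearMap.ker (aeval A₁ f)).map (g : V →ₗ[K] V) = LinearMap.ker (aeval A₂ f) := by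
  have haeval := apply_aeval_of_intertwining (π := (g : V →ₗ[K] V)) hg f
  ext y
  rw [mem_map_equiv, LinearMap.mem_ker, LinearMap.mem_ker, ← g.map_eq_zero_iff]
  have := haeval (g.symm y)
  simp only [LinearEquiv.coe_coe, LinearEquiv.apply_symm_apply] at this
  rw [this]

theorem ker_aeval_le_orthogonal (hT : B.IsOrthogonal T) (hp : IsCoprime p (recipPoly p)) :
    LinearMap.ker (aeval (T : End K V) p) ≤
      B.orthogonal (LinearMap.ker (aeval (T : End K V) p)) := by
  intro y hy x hx
  obtain ⟨a, b, hab⟩ := hp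
  have hy' : y = aeval (T : End K V) (recipPoly p) (aeval (T : End K V) b y) := by
    have h := congr(aeval (T : End K V) $hab y)
    rwa [map_add, map_mul, map_mul, LinearMap.add_apply, End.mul_apply, End.mul_apply,
      LinearMap.mem_ker.1 hy, map_zero, zero_add, map_one, End.one_apply, aeval_apply_comm,
      eq_comm] at h
  change B x y = 0
  rw [hy', recipPoly, map_mul, End.mul_apply, aeval_C, algebraMap_end_apply, map_smul,
    ← apply_aeval_apply_pow hT, LinearMap.mem_ker.1 hx, map_zero, LinearMap.zero_apply, smul_zero]

theorem isCompl_ker_aeval {A : End K V} {p q : K[X]} (hpq : IsCoprime p q)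
    (hA : minpoly K A = p * q) :
    IsCompl (LinearMap.ker (aeval A p)) (LinearMap.ker (aeval A q)) where
  disjoint := disjoint_ker_aeval_of_isCoprime A hpq
  codisjoint := by
    rw [codisjoint_iff, sup_ker_aeval_eq_ker_aeval_mul_of_coprime A hpq, ← hA, minpoly.aeval,
      LinearMap.ker_zero]

theorem eq_of_isOrthogonal_of_eqOn (hB : IsSymplecticForm B) {L L' L₂' : Submodule K V}
    (h : IsCompl L L') (hL₂' : IsLagrangian B L₂') {S R : V ≃ₗ[K] V} (hS : B.IsOrthogonal S)
    (hR : B.IsOrthogonal R) (hSR : ∀ x ∈ L, S x = R x) (hSL' : ∀ y ∈ L', S y ∈ L₂')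
    (hRL' : ∀ y ∈ L', R y ∈ L₂') : S = R := by
  have hS'R (y : V) (hy : y ∈ L') : S y = R y := by
    refine sub_eq_zero.1 (hB.nondegenerate.2 _ fun v ↦ ?_)
    obtain ⟨w, rfl⟩ := S.surjective v
    obtain ⟨x, hx, z, hz, rfl⟩ := mem_sup.1 (h.sup_eq_top ▸ mem_top : w ∈ L ⊔ L')
    rw [map_add, map_add, LinearMap.add_apply,
      hL₂'.apply_eq_zero (hSL' z hz) (sub_mem (hSL' y hy) (hRL' y hy)), add_zero, map_sub, hS,
      hSR x hx, hR, sub_self]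
  ext w
  obtain ⟨x, hx, y, hy, rfl⟩ := mem_sup.1 (h.sup_eq_top ▸ mem_top : w ∈ L ⊔ L')
  rw [map_add, map_add, hSR x hx, hS'R y hy]

section FiniteDimensional

variable [FiniteDimensional K V]

theorem minpoly_eq_of_isAdjointPair (hB : B.Nondegenerate) {A A' : End K V}
    (hA : LinearMap.IsAdjointPair B B A A') : minpoly K A = minpoly K A' := by
  have hiff := aeval_eq_zero_iff_of_isAdjointPair hB hA
  refine eq_of_monic_of_associated (minpoly.monic (Algebra.IsIntegral.isIntegral A))
    (minpoly.monic (Algebra.IsIntegral.isIntegral A')) (associated_of_dvd_dvd ?_ ?_)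
  · exact minpoly.dvd K A ((hiff _).2 (minpoly.aeval K A'))
  · exact minpoly.dvd K A' ((hiff _).1 (minpoly.aeval K A))

theorem minpoly_eq_mul_recipPoly (hB : B.Nondegenerate) (hT : B.IsOrthogonal T)
    (hp : IsHyperbolicFactor p) (hzero : aeval (T : End K V) (p * recipPoly p) = 0)
    (hdvd : p ∣ minpoly K (T : End K V)) : minpoly K (T : End K V) = p * recipPoly p := by
  have hp0 := hp.coeff_zero_ne_zero
  have hmin : minpoly K (T : End K V) ∣ p * recipPoly p := minpoly.dvd K _ hzero
  have hmin0 : (minpoly K (T : End K V)).coeff 0 ≠ 0 := by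
    obtain ⟨f, hf⟩ := hmin
    refine left_ne_zero_of_mul (b := f.coeff 0) ?_
    rw [← mul_coeff_zero, ← hf, mul_coeff_zero]
    exact mul_ne_zero hp0 (coeff_zero_recipPoly_ne_zero hp0)
  have hdvd' : recipPoly p ∣ minpoly K (T : End K V) := by
    obtain ⟨f, hf⟩ := hdvd.trans (minpoly_dvd_reverse_minpoly hB hT)
    rw [← reverse_reverse hmin0, hf, reverse_mul_of_domain, ← C_mul_recipPoly hp0]
    exact dvd_mul_of_dvd_left (dvd_mul_left _ _) _
  exact eq_of_monic_of_associated (minpoly.monic (Algebra.IsIntegral.isIntegral _))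
    (hp.monic.mul (recipPoly_monic hp0))
    (associated_of_dvd_dvd hmin (hp.isCoprime.mul_dvd hdvd hdvd'))

theorem minpoly_eq_mul_recipPoly_of_restrict (hB : B.Nondegenerate) (hT : B.IsOrthogonal T)
    (hp : IsHyperbolicFactor p) {L : Submodule K V} (hL : IsLagrangian B L) {D : End K L}
    (hD : ∀ u : L, T u = D u) (hDp : minpoly K D = p) :
    minpoly K (T : End K V) = p * recipPoly p := by
  have haeval (f : K[X]) (u : L) : (aeval D f u : V) = aeval (T : End K V) f u :=
    apply_aeval_of_intertwining (π := L.subtype) (A := (T : End K V)) (fun u ↦ (hD u).symm) f u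
  refine minpoly_eq_mul_recipPoly hB hT hp
    (aeval_mul_recipPoly_eq_zero_of_apply_eq_zero hT hL fun x hx ↦ ?_) ?_
  · rw [← haeval p ⟨x, hx⟩, ← hDp, minpoly.aeval, LinearMap.zero_apply, ZeroMemClass.coe_zero]
  · refine hDp ▸ minpoly.dvd K D (LinearMap.ext fun u ↦ Subtype.ext ?_)
    rw [haeval, minpoly.aeval, LinearMap.zero_apply, LinearMap.zero_apply, ZeroMemClass.coe_zero]

theorem minpoly_eq_mul_recipPoly_of_quotient (hB : B.Nondegenerate) (hT : B.IsOrthogonal T)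
    (hp : IsHyperbolicFactor p) {L L' : Submodule K V} (hL' : IsLagrangian B L')
    (h : IsCompl L L') (hTL' : ∀ y ∈ L', T y ∈ L') {A : End K L}
    (hA : ∀ u : L, T u - A u ∈ L') (hAp : minpoly K A = p) :
    minpoly K (T : End K V) = p * recipPoly p := by
  let π : V →ₗ[K] L := L.projectionOnto L' h
  have hπL (u : L) : π u = u := projectionOnto_apply_left h u
  have hπ0 (v : V) : π v = 0 ↔ v ∈ L' := projectionOnto_apply_eq_zero_iff h
  have hπT (v : V) : π (T v) = A (π v) := by
    have hv : v - π v ∈ L' := by rw [← hπ0, map_sub, hπL, sub_self]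
    have hTv := (hπ0 _).2 (add_mem (hTL' _ hv) (hA (π v)))
    rwa [map_sub, sub_add_sub_cancel, map_sub, hπL, sub_eq_zero] at hTv
  have haeval := apply_aeval_of_intertwining (D := (T : End K V)) hπT
  refine minpoly_eq_mul_recipPoly hB hT hp
    (aeval_mul_recipPoly_eq_zero_of_apply_mem hB hT hL' hTL' fun x ↦ ?_) ?_
  · rw [← hπ0, haeval, ← hAp, minpoly.aeval, LinearMap.zero_apply]
  · refine hAp ▸ minpoly.dvd K A (LinearMap.ext fun u ↦ ?_)
    rw [← hπL u, ← haeval, minpoly.aeval, LinearMap.zero_apply, map_zero, LinearMap.zero_apply]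

theorem isLagrangian_ker_aeval (hB : IsSymplecticForm B) (hT : B.IsOrthogonal T)
    (hp : IsHyperbolicFactor p) (hTp : minpoly K (T : End K V) = p * recipPoly p) :
    IsLagrangian B (LinearMap.ker (aeval (T : End K V) p)) :=
  isLagrangian_of_isCompl hB (ker_aeval_le_orthogonal hT hp.isCoprime)
    (ker_aeval_le_orthogonal hT hp.recipPoly.isCoprime) (isCompl_ker_aeval hp.isCoprime hTp)

theorem exists_conj_eq_of_minpoly_eq (hB : IsSymplecticForm B) {T₁ T₂ : V ≃ₗ[K] V}
    (hT₁ : B.IsOrthogonal T₁) (hT₂ : B.IsOrthogonal T₂) (hp : IsHyperbolicFactor p)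
    (hdim : p.natDegree + p.natDegree = finrank K V)
    (h₁ : minpoly K (T₁ : End K V) = p * recipPoly p)
    (h₂ : minpoly K (T₂ : End K V) = p * recipPoly p) :
    ∃ S : V ≃ₗ[K] V, B.IsOrthogonal S ∧ S * T₁ * S⁻¹ = T₂ := by
  have hp0 := hp.coeff_zero_ne_zero
  have hp' := hp.recipPoly
  have h₁' : minpoly K (T₁ : End K V) = recipPoly p * recipPoly (recipPoly p) := by
    rw [h₁, recipPoly_recipPoly hp.monic hp0, mul_comm]
  have h₂' : minpoly K (T₂ : End K V) = recipPoly p * recipPoly (recipPoly p) := by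
    rw [h₂, recipPoly_recipPoly hp.monic hp0, mul_comm]
  have hdeg : (minpoly K (T₁ : End K V)).natDegree = finrank K V := by
    rw [h₁, hp.monic.natDegree_mul hp'.monic, natDegree_recipPoly hp0, hdim]
  obtain ⟨g, hg⟩ := exists_linearEquiv_intertwining (h₁.trans h₂.symm) hdeg
  have hgL := map_ker_aeval_of_intertwining hg p
  have hc₁ := isCompl_ker_aeval hp.isCoprime h₁
  have hL₁' := isLagrangian_ker_aeval hB hT₁ hp' h₁'
  have hL₂' := isLagrangian_ker_aeval hB hT₂ hp' h₂'
  obtain ⟨S, hS, hSg', hSL'⟩ := exists_isOrthogonal_extending hB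
    (isLagrangian_ker_aeval hB hT₁ hp h₁) hL₁' hc₁ (isLagrangian_ker_aeval hB hT₂ hp h₂) hL₂'
    (isCompl_ker_aeval hp.isCoprime h₂) (g.ofSubmodules _ _ hgL)
  have hSg (x : V) (hx : aeval (T₁ : End K V) p x = 0) : S x = g x := hSg' ⟨x, hx⟩
  refine ⟨S, hS, mul_inv_eq_iff_eq_mul.2 ?_⟩
  refine eq_of_isOrthogonal_of_eqOn hB hc₁ hL₂' (isOrthogonal_mul hS hT₁) (isOrthogonal_mul hT₂ hS)
    (fun x hx ↦ ?_) (fun y hy ↦ hSL' _ (apply_mem_ker_aeval (T₁ : End K V) hy))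
    (fun y hy ↦ apply_mem_ker_aeval (T₂ : End K V) (hSL' y hy))
  calc S (T₁ x) = g (T₁ x) := hSg _ (apply_mem_ker_aeval (T₁ : End K V) hx)
    _ = T₂ (g x) := hg x
    _ = T₂ (S x) := by rw [hSg x hx]

end FiniteDimensional

end SymplecticMaps

section LagrangianReduction

open Module Submodule

variable {K V : Type*} [Field K] [AddCommGroup V] [Module K V] {B : LinearMap.BilinForm K V}
  {M : V ≃ₗ[K] V} {L : Submodule K V}

/-- The form `(x, y) ↦ B x (M y)` on the subspace `L`. On a Lagrangian `L` it records the
position of `M⁻¹ L` relative to `L`. -/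
def twistedForm (B : LinearMap.BilinForm K V) (M : End K V) (L : Submodule K V) :
    LinearMap.BilinForm K L :=
  (B.compRight M).restrict L

theorem twistedForm_apply (M : End K V) (x y : L) : twistedForm B M L x y = B x (M y) :=
  rfl

/-- The part `L ∩ M⁻¹ L` of the subspace `L` that `M` maps back into `L`, as a subspace of `L`. -/
def returnSubspace (M : End K V) (L : Submodule K V) : Submodule K L :=
  (L.comap M).comap L.subtype

theorem mem_returnSubspace {M : End K V} {x : L} : x ∈ returnSubspace M L ↔ M x ∈ L :=
  Iff.rfl

theorem finrank_returnSubspace (M : End K V) (L : Submodule K V) :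
    finrank K (returnSubspace M L) = finrank K ↥(L ⊓ L.comap M) := by
  rw [← map_comap_subtype, finrank_map_subtype_eq, returnSubspace]

theorem exists_end_eq_on_returnSubspace (M : End K V) (L : Submodule K V) :
    ∃ N : End K L, ∀ x ∈ returnSubspace M L, (N x : V) = M x := by
  obtain ⟨π, hπ⟩ := L.subtype.exists_leftInverse_of_injective L.ker_subtype
  exact ⟨π ∘ₗ M ∘ₗ L.subtype, fun x hx ↦ congr(($hπ ⟨M x, hx⟩ : V))⟩

theorem isCouplingDatum_twistedForm (hL : IsLagrangian B L)
    (hret : ∀ x ∈ L, M x ∈ L → M (M x) ∈ L) (hb : (twistedForm B (M : End K V) L).IsRefl)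
    {N : End K L} (hN : ∀ x ∈ returnSubspace (M : End K V) L, (N x : V) = M x) :
    IsCouplingDatum (twistedForm B (M : End K V) L) (returnSubspace (M : End K V) L) N where
  injOn x hx y hy h := Subtype.ext (M.injective (by rw [← hN x hx, ← hN y hy, h]))
  mapsTo x hx := by
    change M (N x) ∈ L
    rw [hN x hx]
    exact hret x x.2 hx
  left_eq_zero _ hx y := hb _ _ (hL.apply_eq_zero y.2 hx)
  right_eq_zero x _ hy := hL.apply_eq_zero x.2 hy

theorem twistedForm_nondegenerate (hL : IsLagrangian B L)
    (hsymm : ∀ x y, twistedForm B (M : End K V) L x y = twistedForm B (M : End K V) L y x)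
    (hret : returnSubspace (M : End K V) L = ⊥) :
    (twistedForm B (M : End K V) L).Nondegenerate := by
  have hleft (x : L) (hx : ∀ y, twistedForm B (M : End K V) L x y = 0) : x = 0 := by
    rw [← mem_bot K, ← hret, mem_returnSubspace]
    exact hL.mem fun y hy ↦ (hsymm ⟨y, hy⟩ x).trans (hx _)
  exact ⟨hleft, fun y hy ↦ hleft y fun x ↦ (hsymm y x).trans (hy x)⟩

theorem isLagrangian_comap (hM : B.IsOrthogonal M) (hL : IsLagrangian B L) :
    IsLagrangian B (L.comap (M : End K V)) := by
  ext x
  refine ⟨fun hx ↦ hL.mem fun y hy ↦ ?_, fun hx y hy ↦ ?_⟩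
  · obtain ⟨z, rfl⟩ := M.surjective y
    exact (hM z x).trans (hx z hy)
  · exact (hM y x).symm.trans (hL.apply_eq_zero hy hx)

section FiniteDimensional

variable [FiniteDimensional K V] {N D A : End K L}

theorem exists_isLagrangian_sub_mem (hB : IsSymplecticForm B) (hM : B.IsOrthogonal M)
    (hL : IsLagrangian B L) (hN : ∀ x ∈ returnSubspace (M : End K V) L, (N x : V) = M x)
    (h : IsCoupled (twistedForm B (M : End K V) L) (returnSubspace (M : End K V) L) N D A) :
    ∃ L', IsLagrangian B L' ∧ IsCompl L L' ∧ ∀ u, M (D u) - A u ∈ L' := by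
  let F : L →ₗ[K] V := (M : End K V) ∘ₗ L.subtype ∘ₗ D - L.subtype ∘ₗ A
  have hF (u : L) : F u = M (D u) - A u := rfl
  have hiso : LinearMap.range F ≤ B.orthogonal (LinearMap.range F) := by
    rintro _ ⟨u, rfl⟩ _ ⟨w, rfl⟩
    have hDD : B (M (D w)) (M (D u)) = 0 := (hM _ _).trans (hL.apply_eq_zero (D w).2 (D u).2)
    have hsymm : B (A w) (M (D u)) = B (A u) (M (D w)) := (h.symm u w).symm
    change B (F w) (F u) = 0
    rw [hF, hF, map_sub, map_sub, LinearMap.sub_apply, LinearMap.sub_apply, hDD,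
      hL.apply_eq_zero (A w).2 (A u).2, hsymm, ← hB.isAlt.neg_eq (A u : V)]
    ring
  have hdisj : Disjoint (LinearMap.range F) L := by
    refine disjoint_def.2 ?_
    rintro _ ⟨u, rfl⟩ hu
    have hMD : M (D u) ∈ L := by
      rw [hF] at hu
      exact (sub_mem_iff_left _ (A u).2).1 hu
    rw [hF, h.apply_eq u hMD, hN (D u) hMD]
    exact sub_self _
  obtain ⟨L', hL', hFL', hc⟩ := exists_isLagrangian_isCompl hB hL hiso hdisj
  exact ⟨L', hL', hc, fun u ↦ hFL' ⟨u, rfl⟩⟩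

theorem exists_isOrthogonal_of_hasCoupledPair (hB : IsSymplecticForm B) (hM : B.IsOrthogonal M)
    (hL : IsLagrangian B L) (hN : ∀ x ∈ returnSubspace (M : End K V) L, (N x : V) = M x)
    {p q : K[X]} (hp : IsHyperbolicFactor p) (hq : IsHyperbolicFactor q)
    (h : HasCoupledPair (twistedForm B (M : End K V) L) (returnSubspace (M : End K V) L) N p q) :
    ∃ Y : V ≃ₗ[K] V, B.IsOrthogonal Y ∧ minpoly K (Y : End K V) = p * recipPoly p ∧
      minpoly K ((M * Y : V ≃ₗ[K] V) : End K V) = q * recipPoly q := by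
  obtain ⟨D, A, hDp, hAq, hDA⟩ := h
  have hD := injective_of_coeff_minpoly_ne_zero (hDp ▸ hp.coeff_zero_ne_zero)
  have hA := injective_of_coeff_minpoly_ne_zero (hAq ▸ hq.coeff_zero_ne_zero)
  obtain ⟨L', hL', hc, hL'mem⟩ := exists_isLagrangian_sub_mem hB hM hL hN hDA
  have hL'' := isLagrangian_comap hM hL'
  have hdisj : Disjoint L (L'.comap (M : End K V)) := by
    refine disjoint_def.2 fun x hx hx' ↦ ?_
    obtain ⟨u, hu⟩ := LinearMap.injective_iff_surjective.1 hD ⟨x, hx⟩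
    have hAu : (A u : V) ∈ L' := by
      have := sub_mem (show M x ∈ L' from hx') (hL'mem u)
      rwa [hu, sub_sub_cancel] at this
    have hu0 : A u = 0 := Subtype.ext (disjoint_def.1 hc.disjoint _ (A u).2 hAu)
    rw [(map_eq_zero_iff A hA).1 hu0, map_zero] at hu
    exact congr(($hu : V)).symm
  obtain ⟨Y, hY, hYD, hYL'⟩ := exists_isOrthogonal_extending hB hL hL' hc hL hL''
    (hL.isCompl hB hL'' hdisj) (LinearEquiv.ofInjectiveEndo D hD)
  refine ⟨Y, hY, minpoly_eq_mul_recipPoly_of_restrict hB.nondegenerate hY hp hL hYD hDp,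
    minpoly_eq_mul_recipPoly_of_quotient hB.nondegenerate (isOrthogonal_mul hM hY) hq hL' hc
      hYL' (fun u ↦ ?_) hAq⟩
  rw [LinearEquiv.mul_apply, hYD]
  exact hL'mem u

end FiniteDimensional

end LagrangianReduction

section Factorization

open Module Submodule

variable {K V : Type*} [Field K] [AddCommGroup V] [Module K V] {B : LinearMap.BilinForm K V}
  {M : V ≃ₗ[K] V} {L : Submodule K V}

theorem isSelfAdjoint_of_forall_apply_eq_zero (hB : B.IsAlt) {A : End K V}
    (hA : ∀ x, B x (A x) = 0) : B.IsSelfAdjoint A := fun x y ↦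
  (hB.neg_eq y (A x)).symm.trans (LinearMap.IsAlt.neg (B := B.compRight A) hA y x)

section FiniteDimensional

variable [FiniteDimensional K V]

theorem exists_apply_eq_zero_apply_ne_zero (hB : IsSymplecticForm B) {A : End K V}
    (hA : ∀ c : K, A ≠ c • 1) : ∃ x y, B x y = 0 ∧ B (A x) y ≠ 0 := by
  by_contra! h
  have hdep (x : V) : ¬ LinearIndependent K ![x, A x] := by
    have hx : A x ∈ B.orthogonal (B.orthogonal (K ∙ x)) := fun y hy ↦
      hB.isAlt.isRefl _ _ (h x y (hy x (mem_span_singleton_self x)))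
    rw [LinearMap.BilinForm.orthogonal_orthogonal hB.nondegenerate hB.isAlt.isRefl,
      mem_span_singleton] at hx
    obtain ⟨c, hc⟩ := hx
    intro hli
    have := (LinearIndependent.pair_iff.1 hli) c (-1) (by rw [hc, neg_one_smul, add_neg_cancel])
    exact neg_ne_zero.2 one_ne_zero this.2
  obtain ⟨c, hc⟩ := A.exists_eq_smul_id_of_forall_notLinearIndependent hdep
  exact hA c hc

theorem isLagrangian_inf_ker_sup_span (hB : IsSymplecticForm B) {L : Submodule K V}
    (hL : IsLagrangian B L) {x y : V} (hx : x ∈ L) (hxy : B x y ≠ 0) :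
    IsLagrangian B (L ⊓ LinearMap.ker (B.flip y) ⊔ K ∙ y) := by
  have hdim := finrank_inf_ker_add_one (φ := B.flip y) ⟨x, hx, hxy⟩
  have hy : y ∉ L ⊓ LinearMap.ker (B.flip y) := fun hy ↦ hxy (hL.apply_eq_zero hx hy.1)
  refine isLagrangian_of_finrank_le hB (sup_le_orthogonal_sup hB.isAlt.isRefl
    (fun a ha c hc ↦ hL.apply_eq_zero hc.1 ha.1) (span_singleton_le_orthogonal hB.isAlt y) ?_) ?_
  · rw [span_singleton_le_iff_mem]
    exact fun a ha ↦ ha.2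
  · rw [finrank_sup_span_singleton hy, hdim, hL.finrank_add_self hB]

theorem exists_isLagrangian_returnSubspace_of_isAlt (hB : IsSymplecticForm B)
    (hM : B.IsOrthogonal M) (hM0 : ∀ x, B x (M x) = 0) (hMns : ∀ c : K, (M : End K V) ≠ c • 1) :
    ∃ L, IsLagrangian B L ∧ (∀ x ∈ L, M x ∈ L → M (M x) ∈ L) ∧
      finrank K L = finrank K (returnSubspace (M : End K V) L) + 2 := by
  obtain ⟨w, y, hwy, hMwy⟩ := exists_apply_eq_zero_apply_ne_zero hB hMns
  have hadj := isSelfAdjoint_of_forall_apply_eq_zero hB.isAlt (A := (M : End K V)) hM0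
  obtain ⟨L₀, hL₀, hML₀, hw⟩ := exists_isLagrangian_le_comap hB.isAlt hadj hM0 w
  replace hML₀ (x : V) (hx : x ∈ L₀) : M x ∈ L₀ := hML₀ hx
  have hwMy : B w (M y) ≠ 0 := (hadj w y).symm.trans_ne hMwy
  let H := L₀ ⊓ LinearMap.ker (B.flip y) ⊓ LinearMap.ker (B.flip (M y))
  have hMH (x : V) (hx : x ∈ H) : M x ∈ H :=
    ⟨⟨hML₀ _ hx.1.1, (hadj x y).trans hx.2⟩, (hM x y).trans hx.1.2⟩
  let L := L₀ ⊓ LinearMap.ker (B.flip y) ⊔ K ∙ y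
  have hL : IsLagrangian B L := isLagrangian_inf_ker_sup_span hB hL₀ (hML₀ _ hw) hMwy
  have hHL : H ≤ L := inf_le_left.trans le_sup_left
  have hret : L ⊓ L.comap (M : End K V) = H := by
    refine le_antisymm ?_ fun x hx ↦ ⟨hHL hx, hHL (hMH x hx)⟩
    rintro x ⟨hx, hMx⟩
    have hwMx : B w (M x) = 0 := hL.apply_eq_zero (mem_sup_left ⟨hw, hwy⟩) hMx
    have hxMy : B x (M y) = 0 := (hadj x y).symm.trans
      (hL.apply_eq_zero hMx (mem_sup_right (mem_span_singleton_self y)))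
    obtain ⟨a, ha, _, hc, rfl⟩ := mem_sup.1 hx
    obtain ⟨c, rfl⟩ := mem_span_singleton.1 hc
    rw [map_add, map_add, hL₀.apply_eq_zero hw (hML₀ _ ha.1), zero_add, map_smul, map_smul,
      smul_eq_mul, mul_eq_zero, or_iff_left hwMy] at hwMx
    rw [hwMx, zero_smul, add_zero] at hxMy ⊢
    exact ⟨ha, hxMy⟩
  refine ⟨L, hL, fun x hx hMx ↦ (hHL (hMH _ (hMH x (hret.le ⟨hx, hMx⟩)))), ?_⟩
  have hdim : finrank K (L₀ ⊓ LinearMap.ker (B.flip y) : Submodule K V) + 1 = finrank K L₀ :=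
    finrank_inf_ker_add_one ⟨M w, hML₀ _ hw, hMwy⟩
  have hHdim : finrank K H + 1 = finrank K (L₀ ⊓ LinearMap.ker (B.flip y) : Submodule K V) :=
    finrank_inf_ker_add_one ⟨w, ⟨hw, hwy⟩, hwMy⟩
  have := hL.finrank_add_self hB
  have := hL₀.finrank_add_self hB
  rw [finrank_returnSubspace, hret]
  lia

theorem exists_hasCoupledPair_of_isAlt (hB : IsSymplecticForm B) (hM : B.IsOrthogonal M)
    (hM0 : ∀ x, B x (M x) = 0) (hMns : ∀ c : K, (M : End K V) ≠ c • 1) {n : ℕ} (hn3 : 2 < n)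
    (hn : finrank K V = n + n) {p q : K[X]} (hp : p.Monic) (hpn : p.natDegree = n)
    (hp0 : p.coeff 0 ≠ 0) (hq : q.Monic) (hqn : q.natDegree = n) :
    ∃ (L : Submodule K V) (N : End K L), IsLagrangian B L ∧
      (∀ x ∈ returnSubspace (M : End K V) L, (N x : V) = M x) ∧
      HasCoupledPair (twistedForm B (M : End K V) L) (returnSubspace (M : End K V) L) N p q := by
  obtain ⟨L, hL, hret, hdim⟩ := exists_isLagrangian_returnSubspace_of_isAlt hB hM hM0 hMns
  obtain ⟨N, hN⟩ := exists_end_eq_on_returnSubspace (M : End K V) L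
  have halt : (twistedForm B (M : End K V) L).IsAlt := fun x ↦ hM0 x
  have hLn := hL.finrank_add_self hB
  refine ⟨L, N, hL, hN, (isCouplingDatum_twistedForm hL hret halt.isRefl hN).hasCoupledPair_of_isAlt
    (one_le_finrank_iff.1 (by lia)) halt hdim hp (by lia) hp0 hq (by lia)⟩

theorem exists_isLagrangian_twistedForm_symm (hB : B.IsAlt) (hM : B.IsOrthogonal M) (v : V) :
    ∃ L, IsLagrangian B L ∧ v ∈ L ∧ (∀ x ∈ L, M x ∈ L → M (M x) ∈ L) ∧
      ∀ x y, twistedForm B (M : End K V) L x y = twistedForm B (M : End K V) L y x := by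
  let T : End K V := (M : End K V) + (M.symm : End K V)
  have hT (x : V) : T x = M x + M.symm x := rfl
  have hadj (x y : V) : B (M x) y = B x (M.symm y) := isAdjointPair_symm hM x y
  have hadj' (x y : V) : B (M.symm x) y = B x (M y) := by
    rw [← hM, LinearEquiv.apply_symm_apply]
  have hTadj : B.IsSelfAdjoint T := fun x y ↦ by
    rw [hT, hT, map_add, map_add, LinearMap.add_apply, hadj, hadj', add_comm]
  have hT0 (x : V) : B x (T x) = 0 := by
    rw [hT, map_add, ← hadj, ← hB.neg_eq x (M x), add_neg_cancel]
  obtain ⟨L, hL, hTL, hv⟩ := exists_isLagrangian_le_comap hB hTadj hT0 v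
  refine ⟨L, hL, hv, fun x hx hMx ↦ ?_, fun x y ↦ ?_⟩
  · have hTMx : M (M x) + x ∈ L := by simpa [hT] using hTL hMx
    exact (add_mem_cancel_right hx).1 hTMx
  · have hxTy : B x (M y) + B (M x) y = 0 := by
      rw [hadj, ← map_add, ← hT]
      exact hL.apply_eq_zero x.2 (hTL y.2)
    rw [twistedForm_apply, twistedForm_apply]
    exact (eq_neg_of_add_eq_zero_left hxTy).trans (hB.neg_eq (M x) y)

theorem exists_hasCoupledPair (hB : IsSymplecticForm B) (hM : B.IsOrthogonal M)
    (hMns : ∀ c : K, (M : End K V) ≠ c • 1) {n : ℕ} (hn3 : 2 < n)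
    (hn : finrank K V = n + n) {p q : K[X]} (hp : p.Monic) (hpn : p.natDegree = n)
    (hp0 : p.coeff 0 ≠ 0) (hq : q.Monic) (hqn : q.natDegree = n) (hpq : p ≠ q) :
    ∃ (L : Submodule K V) (N : End K L), IsLagrangian B L ∧
      (∀ x ∈ returnSubspace (M : End K V) L, (N x : V) = M x) ∧
      HasCoupledPair (twistedForm B (M : End K V) L) (returnSubspace (M : End K V) L) N p q := by
  by_cases hM0 : ∀ x, B x (M x) = 0
  · exact exists_hasCoupledPair_of_isAlt hB hM hM0 hMns hn3 hn hp hpn hp0 hq hqn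
  obtain ⟨v, hv⟩ := not_forall.1 hM0
  obtain ⟨L, hL, hvL, hret, hsymm⟩ := exists_isLagrangian_twistedForm_symm hB.isAlt hM v
  obtain ⟨N, hN⟩ := exists_end_eq_on_returnSubspace (M : End K V) L
  have hLn : finrank K L = n := by have := hL.finrank_add_self hB; lia
  refine ⟨L, N, hL, hN, ?_⟩
  rcases eq_or_ne (returnSubspace (M : End K V) L) ⊥ with hbot | hbot
  · rw [hbot]
    exact hasCoupledPair_bot N hsymm (twistedForm_nondegenerate hL hsymm hbot) (v := ⟨v, hvL⟩) hv
      hn3 hLn hp hpn hp0 hq hqn hpq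
  · have hrefl : (twistedForm B (M : End K V) L).IsRefl := fun x y h ↦ (hsymm y x).trans h
    exact (isCouplingDatum_twistedForm hL hret hrefl hN).hasCoupledPair_of_isSymm hbot hsymm
      (v := ⟨v, hvL⟩) hv hLn hp hpn hp0 hq hqn

theorem exists_eq_conj_mul_conj (hB : IsSymplecticForm B) {n : ℕ} (hn3 : 2 < n)
    (hn : finrank K V = n + n) {P₁ P₂ : V ≃ₗ[K] V} (hP₁ : B.IsOrthogonal P₁)
    (hP₂ : B.IsOrthogonal P₂) {q₁ q₂ : K[X]} (hq₁ : IsHyperbolicFactor q₁)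
    (hq₁n : q₁.natDegree = n) (hmin₁ : minpoly K (P₁ : End K V) = q₁ * recipPoly q₁)
    (hq₂ : IsHyperbolicFactor q₂) (hq₂n : q₂.natDegree = n)
    (hmin₂ : minpoly K (P₂ : End K V) = q₂ * recipPoly q₂) (hM : B.IsOrthogonal M)
    (hMns : ∀ c : K, (M : End K V) ≠ c • 1) :
    ∃ S₁ S₂ : V ≃ₗ[K] V, B.IsOrthogonal S₁ ∧ B.IsOrthogonal S₂ ∧
      M = S₁ * P₁ * S₁⁻¹ * (S₂ * P₂ * S₂⁻¹) := by
  obtain ⟨p, hp, hpn, hmin, hne⟩ := exists_isHyperbolicFactor_ne hq₂ (by lia) q₁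
  obtain ⟨L, N, hL, hN, hpair⟩ := exists_hasCoupledPair hB hM hMns hn3 hn hp.monic (hpn.trans hq₂n)
    hp.coeff_zero_ne_zero hq₁.monic hq₁n hne
  obtain ⟨Y, hY, hYmin, hMYmin⟩ := exists_isOrthogonal_of_hasCoupledPair hB hM hL hN hp hq₁ hpair
  obtain ⟨S₁, hS₁, hMY⟩ := exists_conj_eq_of_minpoly_eq hB hP₁ (isOrthogonal_mul hM hY) hq₁
    (by lia) hmin₁ hMYmin
  have hYinv_min : minpoly K ((Y⁻¹ : V ≃ₗ[K] V) : End K V) = p * recipPoly p :=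
    (minpoly_eq_of_isAdjointPair hB.nondegenerate (isAdjointPair_symm hY)).symm.trans hYmin
  obtain ⟨S₂, hS₂, hYinv⟩ := exists_conj_eq_of_minpoly_eq hB hP₂ (isOrthogonal_inv hY) hp
    (by lia) (hmin₂.trans hmin.symm) hYinv_min
  exact ⟨S₁, S₂, hS₁, hS₂, by rw [hMY, hYinv, mul_inv_cancel_right]⟩

end FiniteDimensional

end Factorization

section SymplecticMatrices

open Module

variable {K : Type*} [Field K] {n : ℕ} {P : Matrix (Fin n ⊕ Fin n) (Fin n ⊕ Fin n) K}

theorem sympJ_eq_neg_J (n : ℕ) (K : Type*) [Field K] : sympJ n K = -Matrix.J (Fin n) K := by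
  rw [sympJ, Matrix.J, fromBlocks_neg, neg_zero, neg_neg]

theorem isSymplectic_iff_mem_symplecticGroup :
    IsSymplectic P ↔ P ∈ symplecticGroup (Fin n) K := by
  rw [IsSymplectic, sympJ_eq_neg_J, Matrix.mul_neg, Matrix.neg_mul, neg_inj,
    SymplecticGroup.mem_iff]

theorem isSymplecticForm_toBilin'_sympJ (n : ℕ) (K : Type*) [Field K] :
    IsSymplecticForm (Matrix.toBilin' (sympJ n K)) where
  isAlt x := by
    simp [Matrix.toBilin'_apply', sympJ, fromBlocks_mulVec, dotProduct, Matrix.neg_mulVec,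
      mul_comm]
  nondegenerate := by
    refine LinearMap.BilinForm.nondegenerate_toBilin'_of_det_ne_zero' _ (IsUnit.ne_zero ?_)
    rw [sympJ_eq_neg_J, ← Matrix.J_transpose, det_transpose]
    exact Matrix.isUnit_det_J (Fin n) K

theorem isOrthogonal_toLin'_iff_isSymplectic :
    (Matrix.toBilin' (sympJ n K)).IsOrthogonal (Matrix.toLin' P) ↔ IsSymplectic P := by
  rw [isSymplectic_iff_mem_symplecticGroup, SymplecticGroup.mem_iff', ← neg_inj, ← Matrix.neg_mul,
    ← Matrix.mul_neg, ← sympJ_eq_neg_J, ← Matrix.toBilin'.injective.eq_iff, ← Matrix.toBilin'_comp,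
    LinearMap.ext_iff₂]
  rfl

theorem IsSymplectic.exists_linearEquiv (hP : IsSymplectic P) :
    ∃ T : (Fin n ⊕ Fin n → K) ≃ₗ[K] (Fin n ⊕ Fin n → K),
      (T : End K (Fin n ⊕ Fin n → K)) = Matrix.toLin' P ∧
        (Matrix.toBilin' (sympJ n K)).IsOrthogonal T := by
  have hP' := isOrthogonal_toLin'_iff_isSymplectic.2 hP
  have hdet := SymplecticGroup.symplectic_det (isSymplectic_iff_mem_symplecticGroup.1 hP)
  exact ⟨P.toLinearEquiv' (P.invertibleOfIsUnitDet hdet), rfl, hP'⟩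

theorem toMatrix'_conj {ι : Type*} [Fintype ι] [DecidableEq ι] (S T : (ι → K) ≃ₗ[K] (ι → K)) :
    LinearMap.toMatrix' ((S * T * S⁻¹ : (ι → K) ≃ₗ[K] (ι → K)) : End K (ι → K)) =
      LinearMap.toMatrix' (S : End K (ι → K)) * LinearMap.toMatrix' (T : End K (ι → K)) *
        (LinearMap.toMatrix' (S : End K (ι → K)))⁻¹ := by
  have hS : LinearMap.toMatrix' (S : End K (ι → K)) *
      LinearMap.toMatrix' ((S⁻¹ : (ι → K) ≃ₗ[K] (ι → K)) : End K (ι → K)) = 1 := by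
    rw [← LinearMap.toMatrix'_mul, ← LinearMap.toMatrix'_one]
    exact congr_arg _ S.comp_symm
  rw [Matrix.inv_eq_right_inv hS, ← LinearMap.toMatrix'_mul, ← LinearMap.toMatrix'_mul]
  rfl

end SymplecticMatrices

theorem product_of_cyclic_strictly_hyperbolic_classes {K : Type*} [Field K] {n : ℕ}
    (hn : 3 ≤ n)
    (P₁ P₂ : Matrix (Fin n ⊕ Fin n) (Fin n ⊕ Fin n) K)
    (hP₁ : IsSymplectic P₁) (hP₂ : IsSymplectic P₂)
    (hc₁ : IsCyclicMat P₁) (hc₂ : IsCyclicMat P₂)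
    (hs₁ : IsStrictlyHyperbolic P₁) (hs₂ : IsStrictlyHyperbolic P₂)
    (M : Matrix (Fin n ⊕ Fin n) (Fin n ⊕ Fin n) K)
    (hM : IsSymplectic M)
    (hMns : ∀ c : K, M ≠ c • (1 : Matrix (Fin n ⊕ Fin n) (Fin n ⊕ Fin n) K)) :
    ∃ S₁ S₂ : Matrix (Fin n ⊕ Fin n) (Fin n ⊕ Fin n) K,
      IsSymplectic S₁ ∧ IsSymplectic S₂ ∧
      M = (S₁ * P₁ * S₁⁻¹) * (S₂ * P₂ * S₂⁻¹) := by
  obtain ⟨q₁, hq₁, hq₁n, hq₁0, hcop₁, hmin₁⟩ := hs₁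
  obtain ⟨q₂, hq₂, hq₂n, hq₂0, hcop₂, hmin₂⟩ := hs₂
  obtain ⟨T₁, hT₁P₁, hT₁⟩ := hP₁.exists_linearEquiv
  obtain ⟨T₂, hT₂P₂, hT₂⟩ := hP₂.exists_linearEquiv
  obtain ⟨T, hTM, hT⟩ := hM.exists_linearEquiv
  have hTns (c : K) : (T : Module.End K (Fin n ⊕ Fin n → K)) ≠ c • 1 := by
    rw [hTM, Module.End.one_eq_id, ← Matrix.toLin'_one, ← map_smul,
      Matrix.toLin'.injective.ne_iff]
    exact hMns c
  have hdim : Module.finrank K (Fin n ⊕ Fin n → K) = n + n := by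
    rw [Module.finrank_fintype_fun_eq_card, Fintype.card_sum, Fintype.card_fin]
  obtain ⟨S₁, S₂, hS₁, hS₂, hTS⟩ := exists_eq_conj_mul_conj (isSymplecticForm_toBilin'_sympJ n K)
    hn hdim hT₁ hT₂ ⟨hq₁, hq₁0, hcop₁⟩ hq₁n (by rw [hT₁P₁, Matrix.minpoly_toLin', hmin₁])
    ⟨hq₂, hq₂0, hcop₂⟩ hq₂n (by rw [hT₂P₂, Matrix.minpoly_toLin', hmin₂]) hT hTns
  refine ⟨LinearMap.toMatrix' S₁, LinearMap.toMatrix' S₂,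
    isOrthogonal_toLin'_iff_isSymplectic.1 (by rwa [Matrix.toLin'_toMatrix']),
    isOrthogonal_toLin'_iff_isSymplectic.1 (by rwa [Matrix.toLin'_toMatrix']), ?_⟩
  rw [← LinearMap.toMatrix'_toLin' M, ← LinearMap.toMatrix'_toLin' P₁,
    ← LinearMap.toMatrix'_toLin' P₂, ← hTM, ← hT₁P₁, ← hT₂P₂, ← toMatrix'_conj, ← toMatrix'_conj,
    ← LinearMap.toMatrix'_mul, hTS]
  rfl
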